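/- There is a constant C > 0 such that for every finite subset F ⊂ ℤ and every p₀ ∈ (1, ∞), sup_{λ>0} λ · ( #{x ∈ ℤ : sup_{n ∈ ℕ} ℳ_{2^n}(𝟙_F)(x) > λ} )^{1/p₀} ≤ C (p₀ − 1)^{−2/p₀} (#F)^{1/p₀}, with C independent of F and p₀. -/

import Mathlib

open scoped BigOperators

/-- The set of primes `p ≤ N`. -/
def primesUpTo (N : ℕ) : Finset ℕ := (Finset.range (N + 1)).filter Nat.Prime

/-- `ϑ(N) = Σ_{p ∈ ℙ_N} log p`. -/
noncomputable def theta (N : ℕ) : ℝ := ∑ p ∈ primesUpTo N, Real.log p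

/-- The weighted average `ℳ_N f(x) = (1/ϑ(N)) Σ_{p ∈ ℙ_N} f(x + p) log p`. -/
noncomputable def weightedPrimeAvg (f : ℤ → ℝ) (N : ℕ) (x : ℤ) : ℝ :=
  (theta N)⁻¹ * ∑ p ∈ primesUpTo N, f (x + p) * Real.log p

namespace PM
open Finset

noncomputable def chi1 (p : ℕ) (n : ℤ) : ℝ := if (p : ℤ) ∣ n then (p : ℝ) - 1 else -1

noncomputable def chi (Q : Finset ℕ) (n : ℤ) : ℝ := ∏ p ∈ Q, chi1 p n

def nn (Q : Finset ℕ) : ℕ := ∏ p ∈ Q, p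

/-- CRT for sums -/
lemma crt_sum (p M : ℕ) (hp : 0 < p) (hM : 0 < M) (hc : Nat.Coprime p M) (f g : ℕ → ℝ)
    (hf : Function.Periodic f p) (hg : Function.Periodic g M) :
    ∑ n ∈ range (p * M), f n * g n = (∑ n ∈ range p, f n) * ∑ n ∈ range M, g n := by
  rw [sum_mul_sum, ← sum_product']
  refine sum_bij' (fun n _ => (n % p, n % M)) (fun ab _ => (Nat.chineseRemainder hc ab.1 ab.2 : ℕ))
    ?_ ?_ ?_ ?_ ?_
  · intro a _
    simp [Nat.mod_lt _ hp, Nat.mod_lt _ hM]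
  · intro ab _
    simpa using Nat.chineseRemainder_lt_mul hc ab.1 ab.2 hp.ne' hM.ne'
  · intro a ha
    have h := (Nat.chineseRemainder hc (a % p) (a % M)).2
    have h1 : (Nat.chineseRemainder hc (a % p) (a % M) : ℕ) ≡ a [MOD p * M] := by
      rw [← Nat.modEq_and_modEq_iff_modEq_mul hc]
      exact ⟨h.1.trans (Nat.mod_modEq _ _), h.2.trans (Nat.mod_modEq _ _)⟩
    exact Nat.ModEq.eq_of_lt_of_lt h1 (Nat.chineseRemainder_lt_mul hc _ _ hp.ne' hM.ne')
      (by simpa using ha)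
  · intro ab hab
    have h := (Nat.chineseRemainder hc ab.1 ab.2).2
    simp only [mem_product, mem_range] at hab
    ext
    · have := h.1
      simp only [Nat.ModEq] at this
      simpa [Nat.mod_eq_of_lt hab.1] using this
    · have := h.2
      simp only [Nat.ModEq] at this
      simpa [Nat.mod_eq_of_lt hab.2] using this
  · intro a _
    simp only [hf.map_mod_nat, hg.map_mod_nat]

lemma per_of_dvd {f : ℕ → ℝ} {p M : ℕ} (hf : Function.Periodic f p) (h : p ∣ M) :
    Function.Periodic f M := by
  obtain ⟨k, rfl⟩ := h
  have := hf.nat_mul k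
  simpa [mul_comm] using this

lemma prod_per (S : Finset ℕ) (f : ℕ → ℕ → ℝ) (hf : ∀ p ∈ S, Function.Periodic (f p) p) :
    Function.Periodic (fun n => ∏ p ∈ S, f p n) (nn S) := by
  intro n
  refine prod_congr rfl fun p hp => ?_
  exact per_of_dvd (hf p hp) (dvd_prod_of_mem _ hp) n

lemma nn_pos {S : Finset ℕ} (hS : ∀ p ∈ S, p.Prime) : 0 < nn S :=
  prod_pos fun p hp => (hS p hp).pos

lemma prod_sum_per (S : Finset ℕ) (hS : ∀ p ∈ S, p.Prime) (f : ℕ → ℕ → ℝ)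
    (hf : ∀ p ∈ S, Function.Periodic (f p) p) :
    ∑ n ∈ range (nn S), ∏ p ∈ S, f p n = ∏ p ∈ S, ∑ n ∈ range p, f p n := by
  classical
  induction S using Finset.induction_on with
  | empty => simp [nn]
  | insert q S hq ih =>
    have hS' : ∀ p ∈ S, p.Prime := fun p hp => hS p (mem_insert_of_mem hp)
    have hf' : ∀ p ∈ S, Function.Periodic (f p) p := fun p hp => hf p (mem_insert_of_mem hp)
    rw [prod_insert hq, ← ih hS' hf', ← crt_sum q (nn S) (hS q (mem_insert_self _ _)).pos (nn_pos hS')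
      _ _ _ (hf q (mem_insert_self _ _)) (prod_per S f hf')]
    · simp only [nn, prod_insert hq]
    · refine Nat.Coprime.prod_right fun p hp => ?_
      rw [Nat.coprime_primes (hS q (mem_insert_self _ _)) (hS' p hp)]
      rintro rfl
      exact hq hp

lemma per_range (F : ℕ → ℝ) (M : ℕ) (hF : Function.Periodic F M) (q r : ℕ) :
    ∑ n ∈ range (M * q + r), F n = q * ∑ n ∈ range M, F n + ∑ n ∈ range r, F n := by
  induction q with
  | zero => simp
  | succ q ih =>
    have : M * (q + 1) + r = M + (M * q + r) := by ring
    rw [this, sum_range_add]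
    have h2 : ∀ x, F (M + x) = F x := fun x => by rw [add_comm]; exact hF x
    simp only [h2, ih]
    push_cast; ring

lemma per_mean (F : ℕ → ℝ) (M : ℕ) (hM : 0 < M) (hF : Function.Periodic F M) (K μ : ℝ)
    (hK : ∀ n, |F n| ≤ K) (hμ : ∑ n ∈ range M, F n = M * μ) (L : ℕ) :
    |∑ n ∈ range L, F n - L * μ| ≤ 2 * M * K := by
  have hMR : (0 : ℝ) < M := by exact_mod_cast hM
  have hμK : |μ| ≤ K := by
    have h1 : |∑ n ∈ range M, F n| ≤ M * K := by
      refine (abs_sum_le_sum_abs _ _).trans ?_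
      refine (sum_le_sum fun i _ => hK i).trans ?_
      simp
    rw [hμ, abs_mul, abs_of_pos hMR] at h1
    exact le_of_mul_le_mul_left h1 hMR
  have hK0 : 0 ≤ K := (abs_nonneg _).trans hμK
  have hL := Nat.div_add_mod L M
  have e1 : ∑ n ∈ range L, F n - L * μ = ∑ n ∈ range (L % M), (F n - μ) := by
    rw [sum_sub_distrib]
    conv_lhs => rw [← hL]
    rw [per_range F M hF, hμ]
    push_cast
    simp; ring
  rw [e1]
  refine (abs_sum_le_sum_abs _ _).trans ?_
  have : ∀ i ∈ range (L % M), |F i - μ| ≤ 2 * K := fun i _ => by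
    refine (abs_sub _ _).trans ?_
    linarith [hK i]
  refine (sum_le_sum this).trans ?_
  simp only [sum_const, card_range, nsmul_eq_mul]
  have : ((L % M : ℕ) : ℝ) ≤ M := by exact_mod_cast (Nat.mod_lt L hM).le
  nlinarith

lemma per_upper (F : ℕ → ℝ) (M : ℕ) (hM : 0 < M) (hF : Function.Periodic F M) (B : ℝ)
    (h0 : ∀ n, 0 ≤ F n) (hB : ∑ n ∈ range M, F n ≤ M * B) (L : ℕ) :
    ∑ n ∈ range L, F n ≤ (L + M) * B := by
  have hMR : (0 : ℝ) < M := by exact_mod_cast hM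
  have hL := Nat.div_add_mod L M
  have hs0 : 0 ≤ ∑ n ∈ range M, F n := sum_nonneg fun i _ => h0 i
  have hB0 : 0 ≤ B := by
    by_contra h; push Not at h; nlinarith
  have h1 : ∑ n ∈ range L, F n ≤ ∑ n ∈ range (M * (L / M + 1) + 0), F n := by
    refine sum_le_sum_of_subset_of_nonneg ?_ fun i _ _ => h0 i
    refine range_subset_range.2 ?_
    have := Nat.mod_lt L hM
    rw [mul_add]; omega
  rw [per_range F M hF] at h1
  simp only [range_zero, sum_empty, add_zero] at h1
  refine h1.trans ?_
  have h2 : (((L / M + 1 : ℕ)) : ℝ) * M ≤ L + M := by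
    have : (L / M + 1) * M ≤ L + M := by
      have := Nat.div_mul_le_self L M
      rw [add_mul]; omega
    exact_mod_cast this
  calc ((L / M + 1 : ℕ) : ℝ) * ∑ n ∈ range M, F n ≤ ((L / M + 1 : ℕ) : ℝ) * (M * B) := by gcongr
    _ = (((L / M + 1 : ℕ)) : ℝ) * M * B := by ring
    _ ≤ _ := by gcongr

lemma chi1_per (p : ℕ) (a : ℤ) : Function.Periodic (fun n : ℕ => chi1 p (a + n)) p := by
  intro n
  simp only [chi1]
  have : (p : ℤ) ∣ a + ((n + p : ℕ) : ℤ) ↔ (p : ℤ) ∣ a + n := by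
    push_cast
    rw [← add_assoc, dvd_add_self_right]
  simp only [this]

lemma abs_chi1_le (p : ℕ) (hp : 2 ≤ p) (n : ℤ) : |chi1 p n| ≤ p := by
  have : (2 : ℝ) ≤ p := by exact_mod_cast hp
  unfold chi1
  split_ifs
  · rw [abs_le]; constructor <;> linarith
  · rw [abs_le]; constructor <;> linarith

lemma abs_chi_le (Q : Finset ℕ) (hQ : ∀ p ∈ Q, p.Prime) (n : ℤ) : |chi Q n| ≤ nn Q := by
  unfold chi nn
  rw [abs_prod]
  push_cast
  exact prod_le_prod (fun _ _ => abs_nonneg _) fun p hp => abs_chi1_le p (hQ p hp).two_le n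

/-- sum of an indicator of divisibility over a period -/
lemma sum_ind (p : ℕ) (hp : 0 < p) (a : ℤ) :
    ∑ n ∈ range p, (if (p : ℤ) ∣ a + n then (1 : ℝ) else 0) = 1 := by
  have hp' : (0 : ℤ) < p := by exact_mod_cast hp
  obtain ⟨k, hk⟩ : ∃ k : ℕ, (k : ℤ) = (-a) % p := ⟨((-a) % p).toNat,
    Int.toNat_of_nonneg (Int.emod_nonneg _ hp'.ne')⟩
  have hkp : k < p := by
    have := Int.emod_lt_of_pos (-a) hp'
    omega
  rw [sum_eq_single k]
  · rw [if_pos]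
    rw [hk]
    have := Int.mul_ediv_add_emod (-a) p
    refine ⟨-((-a) / p), ?_⟩
    linarith
  · intro b hb hbk
    rw [if_neg]
    intro h
    apply hbk
    have hb' := mem_range.1 hb
    have hk2 : (p : ℤ) ∣ a + k := by
      rw [hk]
      have := Int.mul_ediv_add_emod (-a) p
      refine ⟨-((-a) / p), ?_⟩
      linarith
    have h3 : (p : ℤ) ∣ (b : ℤ) - k := by
      have := dvd_sub h hk2
      simpa using this
    have h4 := Int.eq_zero_of_abs_lt_dvd h3 (by rw [abs_lt]; constructor <;> omega)
    omega
  · intro h; exact absurd (mem_range.2 hkp) h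

lemma chi1_eq (p : ℕ) (n : ℤ) : chi1 p n = p * (if (p : ℤ) ∣ n then (1 : ℝ) else 0) - 1 := by
  unfold chi1; split_ifs <;> simp

lemma sum_chi1 (p : ℕ) (hp : 0 < p) (a : ℤ) : ∑ n ∈ range p, chi1 p (a + n) = 0 := by
  simp only [chi1_eq, sum_sub_distrib, ← mul_sum, sum_ind p hp]
  simp

lemma sum_chi1_mul (p : ℕ) (hp : 0 < p) (a b : ℤ) :
    ∑ n ∈ range p, chi1 p (a + n) * chi1 p (b + n) = p * chi1 p (a - b) := by
  have h1 : ∀ n : ℕ, chi1 p (a + n) * chi1 p (b + n) =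
      p * chi1 p (a - b) * (if (p : ℤ) ∣ a + n then (1 : ℝ) else 0) - chi1 p (b + n) := by
    intro n
    by_cases h : (p : ℤ) ∣ a + n
    · have : (p : ℤ) ∣ b + n ↔ (p : ℤ) ∣ a - b := by
        have e : a - b = (a + n) - (b + n) := by ring
        rw [e, dvd_sub_right h]
      simp only [chi1, h, this, if_true]
      ring
    · simp only [chi1, h, if_false]; ring
  simp only [h1, sum_sub_distrib, ← mul_sum, sum_ind p hp, sum_chi1 p hp]
  ring

lemma sum_abs_chi1 (p : ℕ) (hp : 0 < p) (a : ℤ) :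
    ∑ n ∈ range p, |chi1 p (a + n)| ≤ p * 2 := by
  have hp1 : (1 : ℝ) ≤ p := by exact_mod_cast hp
  have h1 : ∀ n : ℕ, |chi1 p (a + n)| ≤ p * (if (p : ℤ) ∣ a + n then (1 : ℝ) else 0) + 1 := by
    intro n
    rw [chi1_eq]
    split_ifs <;> simp
    rw [abs_le]; constructor <;> linarith
  refine (sum_le_sum fun n _ => h1 n).trans ?_
  simp only [sum_add_distrib, ← mul_sum, sum_ind p hp]
  simp; linarith

/-- averages of `|χ_Q|`. -/
lemma chi_abs_avg (Q : Finset ℕ) (hQ : ∀ p ∈ Q, p.Prime) (a : ℤ) (L : ℕ) :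
    ∑ n ∈ range L, |chi Q (a + n)| ≤ (L + nn Q) * 2 ^ Q.card := by
  have hP := prod_per Q (fun p n => |chi1 p (a + n)|)
    (fun p _ n => by simpa using congrArg abs (chi1_per p a n))
  simp only [chi, abs_prod]
  refine per_upper _ (nn Q) (nn_pos hQ) hP _ (fun n => prod_nonneg fun _ _ => abs_nonneg _) ?_ L
  rw [prod_sum_per Q hQ (fun p n => |chi1 p (a + n)|)
    (fun p _ n => by simpa using congrArg abs (chi1_per p a n))]
  refine (prod_le_prod (fun p _ => sum_nonneg fun _ _ => abs_nonneg _)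
    (fun p hp => sum_abs_chi1 p (hQ p hp).pos a)).trans ?_
  rw [prod_mul_distrib]
  simp [nn]

/-- correlations of the characters -/
lemma chi_corr (Q Q' : Finset ℕ) (hQ : ∀ p ∈ Q, p.Prime) (hQ' : ∀ p ∈ Q', p.Prime) (a b : ℤ)
    (L : ℕ) (T : ℝ) (hT : nn Q ≤ T) (hT' : nn Q' ≤ T) :
    |∑ n ∈ range L, chi Q (a + n) * chi Q' (b + n) - L * (if Q = Q' then chi Q (a - b) else 0)|
      ≤ 2 * T ^ 4 := by
  classical
  set f : ℕ → ℕ → ℝ := fun p n => (if p ∈ Q then chi1 p (a + n) else 1) *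
    (if p ∈ Q' then chi1 p (b + n) else 1) with hf
  have hS : ∀ p ∈ Q ∪ Q', p.Prime := by
    intro p hp
    rcases mem_union.1 hp with h | h
    · exact hQ p h
    · exact hQ' p h
  have hper : ∀ p ∈ Q ∪ Q', Function.Periodic (f p) p := by
    intro p _ n
    simp only [hf]
    have h1 := chi1_per p a n
    have h2 := chi1_per p b n
    simp only at h1 h2
    rw [h1, h2]
  have hprod : ∀ n : ℕ, chi Q (a + n) * chi Q' (b + n) = ∏ p ∈ Q ∪ Q', f p n := by
    intro n
    simp only [hf, prod_mul_distrib, chi]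
    congr 1
    · rw [prod_ite_mem]; congr 1; ext x; simp +contextual
    · rw [prod_ite_mem]; congr 1; ext x; simp +contextual
  have hsum := prod_sum_per _ hS f hper
  have hmean : ∑ n ∈ range (nn (Q ∪ Q')), ∏ p ∈ Q ∪ Q', f p n =
      nn (Q ∪ Q') * (if Q = Q' then chi Q (a - b) else 0) := by
    rw [hsum]
    split_ifs with h
    · subst h
      simp only [union_idempotent, nn, chi]
      push_cast
      rw [← prod_mul_distrib]
      refine prod_congr rfl fun p hp => ?_
      simp only [hf, hp, if_true]
      exact sum_chi1_mul p (hQ p hp).pos a b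
    · rw [mul_zero]
      have : ∃ p, (p ∈ Q ∧ p ∉ Q') ∨ (p ∉ Q ∧ p ∈ Q') := by
        by_contra hcon
        push Not at hcon
        apply h
        ext p
        have := hcon p
        tauto
      obtain ⟨p, hp⟩ := this
      refine prod_eq_zero (i := p) (by simp; tauto) ?_
      rcases hp with ⟨h1, h2⟩ | ⟨h1, h2⟩
      · simp only [hf, h1, h2, if_true, if_false, mul_one]
        exact sum_chi1 p (hQ p h1).pos a
      · simp only [hf, h1, h2, if_true, if_false, one_mul]
        exact sum_chi1 p (hQ' p h2).pos b
  have hT0 : 0 ≤ T := (Nat.cast_nonneg _).trans hT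
  have key := per_mean (fun n => ∏ p ∈ Q ∪ Q', f p n) (nn (Q ∪ Q')) (nn_pos hS) (prod_per _ f hper)
    (T ^ 2) _ (fun n => by
      rw [← hprod, abs_mul, sq]
      exact mul_le_mul ((abs_chi_le Q hQ _).trans hT) ((abs_chi_le Q' hQ' _).trans hT')
        (abs_nonneg _) hT0) hmean L
  simp only [← hprod] at key
  refine key.trans ?_
  have hnn : (nn (Q ∪ Q') : ℝ) ≤ T ^ 2 := by
    have : nn (Q ∪ Q') ≤ nn Q * nn Q' := by
      have e : nn (Q ∪ Q') * nn (Q ∩ Q') = nn Q * nn Q' := prod_union_inter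
      rw [← e]
      exact Nat.le_mul_of_pos_right _ (nn_pos fun p hp => hQ p (mem_inter.1 hp).1)
    calc (nn (Q ∪ Q') : ℝ) ≤ (nn Q : ℝ) * nn Q' := by exact_mod_cast this
      _ ≤ T * T := by gcongr
      _ = _ := by ring
  nlinarith [sq_nonneg T]

end PM

namespace PM
open Finset

noncomputable def avg (u : ℤ → ℝ) (N : ℕ) (F : Finset ℤ) (x : ℤ) : ℝ :=
  (∑ y ∈ F, if x < y ∧ y ≤ x + N then u (y - x) else 0) / N

lemma u_corr (𝒬 : Finset (Finset ℕ)) (T : ℝ) (h𝒬 : ∀ Q ∈ 𝒬, (∀ p ∈ Q, p.Prime) ∧ (nn Q : ℝ) ≤ T)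
    (c : Finset ℕ → ℝ) (u : ℤ → ℝ) (hu : ∀ n, u n = ∑ Q ∈ 𝒬, c Q * chi Q n) (a b : ℤ) (L : ℕ) :
    |∑ n ∈ range L, u (a + n) * u (b + n) - L * ∑ Q ∈ 𝒬, c Q ^ 2 * chi Q (a - b)|
      ≤ (∑ Q ∈ 𝒬, |c Q|) ^ 2 * (2 * T ^ 4) := by
  have e1 : ∑ n ∈ range L, u (a + n) * u (b + n) =
      ∑ Q ∈ 𝒬, ∑ Q' ∈ 𝒬, c Q * c Q' * ∑ n ∈ range L, chi Q (a + n) * chi Q' (b + n) := by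
    simp only [hu, sum_mul_sum]
    rw [sum_comm]
    refine sum_congr rfl fun Q _ => ?_
    rw [sum_comm]
    refine sum_congr rfl fun Q' _ => ?_
    rw [mul_sum]
    refine sum_congr rfl fun n _ => ?_
    ring
  have e2 : L * ∑ Q ∈ 𝒬, c Q ^ 2 * chi Q (a - b) =
      ∑ Q ∈ 𝒬, ∑ Q' ∈ 𝒬, c Q * c Q' * (L * (if Q = Q' then chi Q (a - b) else 0)) := by
    rw [mul_sum]
    refine sum_congr rfl fun Q hQ => ?_
    rw [sum_eq_single Q]
    · simp; ring
    · intro Q' _ hne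
      rw [if_neg (Ne.symm hne)]; ring
    · intro h; exact absurd hQ h
  rw [e1, e2, ← sum_sub_distrib]
  simp only [← sum_sub_distrib, ← mul_sub]
  refine (abs_sum_le_sum_abs _ _).trans ?_
  rw [sq, sum_mul_sum, sum_mul]
  refine sum_le_sum fun Q hQ => ?_
  refine (abs_sum_le_sum_abs _ _).trans ?_
  rw [sum_mul]
  refine sum_le_sum fun Q' hQ' => ?_
  rw [abs_mul, abs_mul]
  refine mul_le_mul_of_nonneg_left ?_ (by positivity)
  exact chi_corr Q Q' (h𝒬 Q hQ).1 (h𝒬 Q' hQ').1 a b L T (h𝒬 Q hQ).2 (h𝒬 Q' hQ').2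

lemma pair_bound (u ρ : ℤ → ℝ) (R : ℝ) (hR : 0 ≤ R)
    (hcorr : ∀ a b : ℤ, ∀ L : ℕ, |∑ n ∈ range L, u (a + n) * u (b + n) - L * ρ (a - b)| ≤ R)
    (Y : Finset ℤ) (x x' : ℤ) (N N' : ℕ) (hY : Ioc x (x + N) ⊆ Y) :
    |∑ y ∈ Y, (if x < y ∧ y ≤ x + N then u (y - x) else 0) *
      (if x' < y ∧ y ≤ x' + N' then u (y - x') else 0)| ≤
    if |x - x'| ≤ max N N' then (min N N' : ℕ) * |ρ (x' - x)| + R else 0 := by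
  have e1 : ∑ y ∈ Y, (if x < y ∧ y ≤ x + N then u (y - x) else 0) *
      (if x' < y ∧ y ≤ x' + N' then u (y - x') else 0) =
      ∑ y ∈ Ioc (max x x') (min (x + N) (x' + N')), u (y - x) * u (y - x') := by
    symm
    have hsub : Ioc (max x x') (min (x + N) (x' + N')) ⊆ Y := by
      refine Subset.trans ?_ hY
      exact Ioc_subset_Ioc (le_max_left _ _) (min_le_left _ _)
    rw [← sum_subset hsub (f := fun y => (if x < y ∧ y ≤ x + N then u (y - x) else 0) *
      (if x' < y ∧ y ≤ x' + N' then u (y - x') else 0))]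
    · refine sum_congr rfl fun y hy => ?_
      simp only [mem_Ioc, max_lt_iff, le_min_iff] at hy
      rw [if_pos ⟨hy.1.1, hy.2.1⟩, if_pos ⟨hy.1.2, hy.2.2⟩]
    · intro y _ hy
      simp only [mem_Ioc, max_lt_iff, le_min_iff] at hy
      by_cases h1 : x < y ∧ y ≤ x + N
      · by_cases h2 : x' < y ∧ y ≤ x' + N'
        · exact absurd ⟨⟨h1.1, h2.1⟩, h1.2, h2.2⟩ hy
        · rw [if_neg h2, mul_zero]
      · rw [if_neg h1, zero_mul]
  rw [e1]
  set lo := max x x' with hlo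
  set hi := min (x + N) (x' + N') with hhi
  by_cases hlt : lo < hi
  · have hcond : |x - x'| ≤ (max N N' : ℕ) := by
      rw [abs_le]
      push_cast
      constructor <;> omega
    rw [if_pos (by exact_mod_cast hcond)]
    obtain ⟨L, hL⟩ : ∃ L : ℕ, hi = lo + L := ⟨(hi - lo).toNat, by
      rw [Int.toNat_of_nonneg (by omega)]; ring⟩
    have e2 : ∑ y ∈ Ioc lo hi, u (y - x) * u (y - x') =
        ∑ n ∈ range L, u ((lo + 1 - x) + n) * u ((lo + 1 - x') + n) := by
      symm
      refine sum_bij (fun n _ => lo + 1 + n) ?_ ?_ ?_ ?_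
      · intro n hn
        have := mem_range.1 hn
        simp only [mem_Ioc]; omega
      · intro n _ n' _ h
        omega
      · intro y hy
        simp only [mem_Ioc] at hy
        refine ⟨(y - lo - 1).toNat, ?_, ?_⟩
        · rw [mem_range]; omega
        · omega
      · intro n _
        congr 2 <;> ring
    rw [e2]
    have h := hcorr (lo + 1 - x) (lo + 1 - x') L
    have e3 : lo + 1 - x - (lo + 1 - x') = x' - x := by ring
    rw [e3] at h
    have hLle : (L : ℝ) ≤ ((min N N' : ℕ) : ℝ) := by
      have : L ≤ min N N' := by
        rw [le_min_iff]; constructor <;> omega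
      exact_mod_cast this
    have h5 := abs_sub_abs_le_abs_sub (∑ n ∈ range L, u ((lo + 1 - x) + n) * u ((lo + 1 - x') + n))
      (L * ρ (x' - x))
    have h6 : |(L : ℝ) * ρ (x' - x)| ≤ ((min N N' : ℕ) : ℝ) * |ρ (x' - x)| := by
      rw [abs_mul, Nat.abs_cast]
      exact mul_le_mul_of_nonneg_right hLle (abs_nonneg _)
    linarith
  · rw [Ioc_eq_empty (by simpa using hlt)]
    simp only [sum_empty, abs_zero]
    split_ifs <;> positivity

lemma rho_sum (𝒬 : Finset (Finset ℕ)) (N : ℕ) (hN : 1 ≤ N)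
    (h𝒬 : ∀ Q ∈ 𝒬, (∀ p ∈ Q, p.Prime) ∧ nn Q ≤ N) (c : Finset ℕ → ℝ) :
    ∑ h ∈ Icc (-(N : ℤ)) N, |∑ Q ∈ 𝒬, c Q ^ 2 * chi Q h| ≤
      4 * N * ∑ Q ∈ 𝒬, c Q ^ 2 * 2 ^ Q.card := by
  have e : ∀ g : ℤ → ℝ, ∑ h ∈ Icc (-(N : ℤ)) N, g h = ∑ n ∈ range (2 * N + 1), g (-(N : ℤ) + n) := by
    intro g
    symm
    refine sum_bij (fun n _ => -(N : ℤ) + n) ?_ ?_ ?_ ?_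
    · intro n hn
      have := mem_range.1 hn
      simp only [mem_Icc]; omega
    · intro n _ n' _ h
      omega
    · intro y hy
      simp only [mem_Icc] at hy
      refine ⟨(y + N).toNat, ?_, ?_⟩
      · rw [mem_range]; omega
      · omega
    · intro n _; rfl
  rw [e]
  calc _ ≤ ∑ n ∈ range (2 * N + 1), ∑ Q ∈ 𝒬, c Q ^ 2 * |chi Q (-(N : ℤ) + n)| := by
        refine sum_le_sum fun n _ => (abs_sum_le_sum_abs _ _).trans ?_
        refine sum_le_sum fun Q _ => ?_
        rw [abs_mul, abs_of_nonneg (sq_nonneg _)]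
    _ = ∑ Q ∈ 𝒬, c Q ^ 2 * ∑ n ∈ range (2 * N + 1), |chi Q (-(N : ℤ) + n)| := by
        rw [sum_comm]
        simp only [mul_sum]
    _ ≤ ∑ Q ∈ 𝒬, c Q ^ 2 * (4 * N * 2 ^ Q.card) := by
        refine sum_le_sum fun Q hQ => mul_le_mul_of_nonneg_left ?_ (sq_nonneg _)
        refine (chi_abs_avg Q (h𝒬 Q hQ).1 _ _).trans ?_
        refine mul_le_mul_of_nonneg_right ?_ (by positivity)
        have h1 : (nn Q : ℝ) ≤ N := by exact_mod_cast (h𝒬 Q hQ).2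
        have h2 : (1 : ℝ) ≤ N := by exact_mod_cast hN
        push_cast; linarith
    _ = _ := by rw [mul_sum]; refine sum_congr rfl fun Q _ => ?_; ring

lemma count_le (E : Finset ℤ) (x : ℤ) (N : ℕ) (g : ℤ → ℝ) (hg : ∀ h, 0 ≤ g h) :
    ∑ x' ∈ E, (if |x - x'| ≤ N then g (x' - x) else 0) ≤ ∑ h ∈ Icc (-(N : ℤ)) N, g h := by
  rw [← sum_filter]
  rw [← sum_image (f := g) (s := E.filter fun x' => |x - x'| ≤ N) (g := fun x' => x' - x)]
  · refine sum_le_sum_of_subset_of_nonneg ?_ fun i _ _ => hg i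
    intro h hh
    simp only [mem_image, mem_filter] at hh
    obtain ⟨x', ⟨_, h1⟩, rfl⟩ := hh
    rw [abs_le] at h1
    simp only [mem_Icc]; omega
  · intro a _ b _ h
    simpa using h

lemma count_le' (E : Finset ℤ) (x : ℤ) (N : ℕ) (g : ℤ → ℝ) (hg : ∀ h, 0 ≤ g h) :
    ∑ x' ∈ E, (if |x' - x| ≤ N then g (x - x') else 0) ≤ ∑ h ∈ Icc (-(N : ℤ)) N, g h := by
  rw [← sum_filter]
  rw [← sum_image (f := g) (s := E.filter fun x' => |x' - x| ≤ N) (g := fun x' => x - x')]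
  · refine sum_le_sum_of_subset_of_nonneg ?_ fun i _ _ => hg i
    intro h hh
    simp only [mem_image, mem_filter] at hh
    obtain ⟨x', ⟨_, h1⟩, rfl⟩ := hh
    rw [abs_le] at h1
    simp only [mem_Icc]; omega
  · intro a _ b _ h
    simpa using h

/-- The maximal inequality obtained by the `TT*` argument. -/
lemma max_ineq (𝒬 : Finset (Finset ℕ)) (T N0 : ℕ) (hN0 : 1 ≤ N0) (hTN : T ≤ N0)
    (h𝒬 : ∀ Q ∈ 𝒬, (∀ p ∈ Q, p.Prime) ∧ nn Q ≤ T)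
    (c : Finset ℕ → ℝ) (u : ℤ → ℝ) (hu : ∀ n, u n = ∑ Q ∈ 𝒬, c Q * chi Q n)
    (E F : Finset ℤ) (N : ℤ → ℕ) (hN : ∀ x ∈ E, N0 ≤ N x) :
    (∑ x ∈ E, |avg u (N x) F x|) ^ 2 ≤ F.card * E.card *
      (8 * ∑ Q ∈ 𝒬, c Q ^ 2 * 2 ^ Q.card +
        12 * ((∑ Q ∈ 𝒬, |c Q|) ^ 2 * T ^ 4) / N0) := by
  classical
  set ρ : ℤ → ℝ := fun h => ∑ Q ∈ 𝒬, c Q ^ 2 * chi Q h with hρ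
  set R : ℝ := (∑ Q ∈ 𝒬, |c Q|) ^ 2 * (2 * (T : ℝ) ^ 4) with hR
  have hR0 : 0 ≤ R := by positivity
  set S2 : ℝ := ∑ Q ∈ 𝒬, c Q ^ 2 * 2 ^ Q.card with hS2
  have hS20 : 0 ≤ S2 := sum_nonneg fun _ _ => by positivity
  have hN0R : (1 : ℝ) ≤ N0 := by exact_mod_cast hN0
  have hcorr := u_corr 𝒬 T (fun Q hQ => ⟨(h𝒬 Q hQ).1, by exact_mod_cast (h𝒬 Q hQ).2⟩) c u hu
  set k : ℤ → ℤ → ℝ := fun x y => if x < y ∧ y ≤ x + N x then u (y - x) else 0 with hk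
  set σ : ℤ → ℝ := fun x => SignType.sign (avg u (N x) F x) with hσ
  have hσ1 : ∀ x, |σ x| ≤ 1 := by
    intro x
    simp only [hσ]
    rcases SignType.sign (avg u (N x) F x) with _ | _ | _ <;> simp
  have hNpos : ∀ x ∈ E, (1 : ℝ) ≤ N x := fun x hx => by
    have := hN0.trans (hN x hx); exact_mod_cast this
  set g : ℤ → ℝ := fun y => ∑ x ∈ E, σ x / N x * k x y with hg
  have e1 : ∑ x ∈ E, |avg u (N x) F x| = ∑ y ∈ F, g y := by
    simp only [hg]
    rw [sum_comm]
    refine sum_congr rfl fun x _ => ?_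
    have : |avg u (N x) F x| = σ x * avg u (N x) F x := (sign_mul_self _).symm
    rw [this, ← mul_sum]
    simp only [avg, hk]
    ring
  set Y : Finset ℤ := F ∪ E.biUnion fun x => Ioc x (x + N x) with hY
  have hYsub : ∀ x ∈ E, Ioc x (x + N x) ⊆ Y := fun x hx =>
    (subset_biUnion_of_mem (fun x => Ioc x (x + (N x : ℤ))) hx).trans subset_union_right
  have e2 : (∑ y ∈ F, g y) ^ 2 ≤ F.card * ∑ y ∈ Y, g y ^ 2 := by
    refine sq_sum_le_card_mul_sum_sq.trans ?_
    refine mul_le_mul_of_nonneg_left ?_ (by positivity)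
    exact sum_le_sum_of_subset_of_nonneg subset_union_left fun _ _ _ => sq_nonneg _
  set G : ℤ → ℝ := fun h => |ρ h| + R / N0 with hG
  have hG0 : ∀ h, 0 ≤ G h := fun h => by positivity
  have hpair : ∀ x ∈ E, ∀ x' ∈ E, σ x / N x * (σ x' / N x') * ∑ y ∈ Y, k x y * k x' y ≤
      (1 / N x : ℝ) * (if |x - x'| ≤ N x then G (x' - x) else 0) +
      (1 / N x' : ℝ) * (if |x - x'| ≤ N x' then G (x' - x) else 0) := by
    intro x hx x' hx'
    have hb := pair_bound u ρ R hR0 hcorr Y x x' (N x) (N x') (hYsub x hx)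
    have p1 := hNpos x hx
    have p2 := hNpos x' hx'
    have q1 : (N0 : ℝ) ≤ N x := by exact_mod_cast hN x hx
    have q2 : (N0 : ℝ) ≤ N x' := by exact_mod_cast hN x' hx'
    have h1 : σ x / N x * (σ x' / N x') * ∑ y ∈ Y, k x y * k x' y ≤
        (1 / N x : ℝ) * (1 / N x') * |∑ y ∈ Y, k x y * k x' y| := by
      refine (le_abs_self _).trans ?_
      rw [abs_mul, abs_mul, abs_div, abs_div, Nat.abs_cast, Nat.abs_cast]
      have := hσ1 x
      have := hσ1 x'
      gcongr
    refine h1.trans ?_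
    refine (mul_le_mul_of_nonneg_left hb (by positivity)).trans ?_
    have hgen : ∀ a b : ℝ, (N0 : ℝ) ≤ a → 1 ≤ b → a ≤ b → ∀ r : ℝ, 0 ≤ r →
        1 / a * (1 / b) * (a * r + R) ≤ 1 / b * (r + R / N0) := by
      intro a b ha hb hab r hr
      have ha0 : 0 < a := by linarith
      have : 1 / a * (1 / b) * (a * r + R) = 1 / b * (r + R / a) := by
        field_simp
      rw [this]
      have : R / a ≤ R / N0 := div_le_div_of_nonneg_left hR0 (by linarith) ha
      gcongr
    rcases le_total (N x) (N x') with hle | hle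
    · rw [max_eq_right hle, min_eq_left hle]
      have hle' : (N x : ℝ) ≤ N x' := by exact_mod_cast hle
      have t1 : 0 ≤ (1 / N x : ℝ) * (if |x - x'| ≤ N x then G (x' - x) else 0) := by
        have := hG0 (x' - x)
        split_ifs <;> positivity
      split_ifs at t1 ⊢ with c1 c2 c3
      · linarith [hgen _ _ q1 p2 hle' |ρ (x' - x)| (abs_nonneg _)]
      · linarith [hgen _ _ q1 p2 hle' |ρ (x' - x)| (abs_nonneg _)]
      · simpa using t1
      · simp
    · rw [max_eq_left hle, min_eq_right hle]
      have hle' : (N x' : ℝ) ≤ N x := by exact_mod_cast hle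
      have t1 : 0 ≤ (1 / N x' : ℝ) * (if |x - x'| ≤ N x' then G (x' - x) else 0) := by
        have := hG0 (x' - x)
        split_ifs <;> positivity
      have hx3 := hgen _ _ q2 p1 hle' |ρ (x' - x)| (abs_nonneg _)
      rw [mul_comm (1 / (N x' : ℝ))] at hx3
      split_ifs at t1 ⊢ with c1 c2 c3
      · linarith
      · linarith
      · simpa using t1
      · simp
  have e3 : ∑ y ∈ Y, g y ^ 2 = ∑ x ∈ E, ∑ x' ∈ E, σ x / N x * (σ x' / N x') *
      ∑ y ∈ Y, k x y * k x' y := by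
    simp only [hg, sq, sum_mul_sum]
    rw [sum_comm]
    refine sum_congr rfl fun x _ => ?_
    rw [sum_comm]
    refine sum_congr rfl fun x' _ => ?_
    rw [mul_sum]
    refine sum_congr rfl fun y _ => ?_
    ring
  have hGsum : ∀ x ∈ E, ∑ h ∈ Icc (-(N x : ℤ)) (N x), G h ≤ N x * (4 * S2 + 3 * R / N0) := by
    intro x hx
    have p1 := hNpos x hx
    simp only [hG, sum_add_distrib]
    have h1 := rho_sum 𝒬 (N x) (by exact_mod_cast p1)
      (fun Q hQ => ⟨(h𝒬 Q hQ).1, (h𝒬 Q hQ).2.trans (hTN.trans (hN x hx))⟩) c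
    have h2 : ∑ h ∈ Icc (-(N x : ℤ)) (N x), R / N0 ≤ N x * (3 * R / N0) := by
      rw [sum_const, nsmul_eq_mul, Int.card_Icc]
      have : ((N x : ℤ) + 1 - -(N x : ℤ)).toNat = 2 * N x + 1 := by omega
      rw [this]
      push_cast
      have : 0 ≤ R / N0 := by positivity
      have e : (N x : ℝ) * (3 * R / N0) = 3 * N x * (R / N0) := by ring
      rw [e]
      exact mul_le_mul_of_nonneg_right (by linarith) this
    calc _ ≤ 4 * (N x : ℝ) * S2 + N x * (3 * R / N0) := add_le_add h1 h2
      _ = _ := by ring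
  have e4 : ∑ y ∈ Y, g y ^ 2 ≤ E.card * (2 * (4 * S2 + 3 * R / N0)) := by
    rw [e3]
    refine (sum_le_sum fun x hx => sum_le_sum fun x' hx' => hpair x hx x' hx').trans ?_
    simp only [sum_add_distrib]
    have a1 : ∑ x ∈ E, ∑ x' ∈ E, (1 / N x : ℝ) * (if |x - x'| ≤ N x then G (x' - x) else 0) ≤
        E.card * (4 * S2 + 3 * R / N0) := by
      rw [← nsmul_eq_mul]
      refine sum_le_card_nsmul _ _ _ fun x hx => ?_
      rw [← mul_sum]
      have p1 := hNpos x hx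
      have := (count_le E x (N x) G hG0).trans (hGsum x hx)
      rw [one_div, inv_mul_le_iff₀ (by linarith)]
      exact this
    have a2 : ∑ x ∈ E, ∑ x' ∈ E, (1 / N x' : ℝ) * (if |x - x'| ≤ N x' then G (x' - x) else 0) ≤
        E.card * (4 * S2 + 3 * R / N0) := by
      rw [sum_comm, ← nsmul_eq_mul]
      refine sum_le_card_nsmul _ _ _ fun x hx => ?_
      rw [← mul_sum]
      have p1 := hNpos x hx
      have := (count_le' E x (N x) G hG0).trans (hGsum x hx)
      rw [one_div, inv_mul_le_iff₀ (by linarith)]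
      exact this
    linarith
  rw [e1]
  refine e2.trans ?_
  rw [mul_assoc]
  refine mul_le_mul_of_nonneg_left (e4.trans (le_of_eq ?_)) (by positivity)
  simp only [hR]
  ring

/-- One sided Hardy-Littlewood maximal inequality. -/
lemma hl (α : ℝ) (n : ℕ) : ∀ (E F : Finset ℤ) (N : ℤ → ℕ), E.card = n → (∀ x ∈ E, 1 ≤ N x) →
    (∀ x ∈ E, α * N x ≤ (F.filter fun y => x < y ∧ y ≤ x + N x).card) →
    α * E.card ≤ F.card := by
  induction n using Nat.strong_induction_on with
  | _ n ih =>
  intro E F N hn hN hE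
  rcases le_or_gt α 0 with hα | hα
  · have : α * E.card ≤ 0 := mul_nonpos_of_nonpos_of_nonneg hα (by positivity)
    have h2 : (0 : ℝ) ≤ F.card := by positivity
    linarith
  rcases E.eq_empty_or_nonempty with rfl | hne
  · simp
  set x := E.min' hne with hx
  have hxE : x ∈ E := E.min'_mem hne
  set E1 := E.filter fun y => y < x + N x with hE1
  set E2 := E.filter fun y => ¬ y < x + N x with hE2
  have hcard : E1.card + E2.card = E.card := card_filter_add_card_filter_not _
  have hxE1 : x ∈ E1 := by
    have := hN x hxE
    simp only [hE1, mem_filter]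
    exact ⟨hxE, by omega⟩
  have hE1card : E1.card ≤ N x := by
    have : E1 ⊆ Ico x (x + N x) := by
      intro y hy
      simp only [hE1, mem_filter] at hy
      rw [mem_Ico]
      exact ⟨E.min'_le y hy.1, hy.2⟩
    have := card_le_card this
    simpa using this
  have hpos : 0 < E1.card := card_pos.2 ⟨x, hxE1⟩
  set F1 := F.filter fun y => x < y ∧ y ≤ x + N x with hF1
  set F2 := F.filter fun y => ¬ (x < y ∧ y ≤ x + N x) with hF2
  have hFcard : F1.card + F2.card = F.card := card_filter_add_card_filter_not _
  have h2 := ih E2.card (by omega) E2 F2 N rfl (fun y hy => hN y (mem_filter.1 hy).1) (by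
    intro y hy
    have hy' := mem_filter.1 hy
    refine (hE y hy'.1).trans ?_
    have : (F.filter fun z => y < z ∧ z ≤ y + N y) ⊆ F2.filter fun z => y < z ∧ z ≤ y + N y := by
      intro z hz
      simp only [mem_filter, hF2] at hz ⊢
      refine ⟨⟨hz.1, ?_⟩, hz.2⟩
      have := hy'.2
      omega
    exact_mod_cast card_le_card this)
  have h1 : α * E1.card ≤ F1.card := by
    refine le_trans ?_ (hE x hxE)
    have : (E1.card : ℝ) ≤ N x := by exact_mod_cast hE1card
    gcongr
  have c1 : (E.card : ℝ) = E1.card + E2.card := by exact_mod_cast hcard.symm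
  have c2 : (F.card : ℝ) = F1.card + F2.card := by exact_mod_cast hFcard.symm
  rw [c1, c2]
  linarith

end PM

namespace PM
open Finset

noncomputable def phi (Q : Finset ℕ) : ℝ := ∏ p ∈ Q, ((p : ℝ) - 1)

def Pm (m : ℕ) : Finset ℕ := (range (2 ^ m + 1)).filter Nat.Prime

noncomputable def V (m : ℕ) : ℝ := ∏ p ∈ Pm m, ((p : ℝ) / (p - 1))

lemma mem_Pm {m p : ℕ} : p ∈ Pm m ↔ p.Prime ∧ p ≤ 2 ^ m := by
  simp [Pm, Nat.lt_succ_iff, and_comm]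

lemma Pm_mono {m m' : ℕ} (h : m ≤ m') : Pm m ⊆ Pm m' := by
  intro p hp
  rw [mem_Pm] at hp ⊢
  exact ⟨hp.1, hp.2.trans (Nat.pow_le_pow_right (by norm_num) h)⟩

lemma two_le_of_prime {p : ℕ} (hp : p.Prime) : (2 : ℝ) ≤ p := by exact_mod_cast hp.two_le

lemma phi_pos {Q : Finset ℕ} (hQ : ∀ p ∈ Q, p.Prime) : 0 < phi Q :=
  prod_pos fun p hp => by linarith [two_le_of_prime (hQ p hp)]

lemma one_le_V (m : ℕ) : 1 ≤ V m := by
  unfold V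
  calc (1 : ℝ) = ∏ p ∈ Pm m, (1 : ℝ) := by simp
    _ ≤ _ := prod_le_prod (fun _ _ => zero_le_one) fun p hp => by
      have := two_le_of_prime (mem_Pm.1 hp).1
      rw [one_le_div (by linarith)]; linarith

lemma card_block (i : ℕ) : ((Pm (i + 1) \ Pm i).card : ℝ) * i ≤ 2 * 2 ^ i := by
  have h1 : (2 ^ i) ^ (Pm (i + 1) \ Pm i).card * primorial (2 ^ i) ≤ primorial (2 ^ (i + 1)) := by
    have e : primorial (2 ^ (i + 1)) = (∏ p ∈ Pm (i + 1) \ Pm i, p) * ∏ p ∈ Pm i, p := by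
      rw [prod_sdiff (Pm_mono (Nat.le_succ i))]
      rw [primorial_eq_prod_primesLE]
      refine prod_congr ?_ fun _ _ => rfl
      ext p; simp [mem_Pm, Nat.mem_primesLE, and_comm]
    have e' : primorial (2 ^ i) = ∏ p ∈ Pm i, p := by
      rw [primorial_eq_prod_primesLE]
      refine prod_congr ?_ fun _ _ => rfl
      ext p; simp [mem_Pm, Nat.mem_primesLE, and_comm]
    rw [e, e']
    refine Nat.mul_le_mul_right _ ?_
    refine Finset.pow_card_le_prod _ _ _ fun p hp => ?_
    rw [mem_sdiff, mem_Pm, mem_Pm] at hp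
    by_contra h
    exact hp.2 ⟨hp.1.1, by omega⟩
  have h2 : primorial (2 ^ (i + 1)) ≤ primorial (2 ^ i) * 4 ^ (2 ^ i) := by
    have := primorial_add_le (le_refl (2 ^ i))
    have e : 2 ^ (i + 1) = 2 ^ i + 2 ^ i := by ring
    rw [e]
    refine this.trans (Nat.mul_le_mul_left _ ?_)
    have h3 : (2 ^ i + 2 ^ i).choose (2 ^ i) ≤ 2 ^ (2 ^ i + 2 ^ i) := Nat.choose_le_two_pow _ _
    refine h3.trans (le_of_eq ?_)
    rw [← two_mul, pow_mul]; norm_num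
  have h3 : (2 ^ i) ^ (Pm (i + 1) \ Pm i).card ≤ 4 ^ (2 ^ i) := by
    have := h1.trans h2
    rw [mul_comm] at this
    exact Nat.le_of_mul_le_mul_left this (primorial_pos _)
  have h4 : (4 : ℕ) ^ (2 ^ i) = 2 ^ (2 * 2 ^ i) := by rw [pow_mul]; norm_num
  rw [← pow_mul, h4] at h3
  have h5 := (Nat.pow_le_pow_iff_right (by norm_num : 1 < 2)).1 h3
  have : (Pm (i + 1) \ Pm i).card * i ≤ 2 * 2 ^ i := by rw [mul_comm]; exact h5
  exact_mod_cast this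

lemma V_succ (i : ℕ) (hi : 1 ≤ i) : V (i + 1) ≤ V i * Real.exp (2 / i) := by
  have hiR : (1 : ℝ) ≤ i := by exact_mod_cast hi
  have e : V (i + 1) = (∏ p ∈ Pm (i + 1) \ Pm i, ((p : ℝ) / (p - 1))) * V i := by
    unfold V
    rw [prod_sdiff (Pm_mono (Nat.le_succ i))]
  rw [e, mul_comm]
  have hV := one_le_V i
  refine mul_le_mul_of_nonneg_left ?_ (by linarith)
  have h1 : ∏ p ∈ Pm (i + 1) \ Pm i, ((p : ℝ) / (p - 1)) ≤
      ∏ p ∈ Pm (i + 1) \ Pm i, Real.exp (1 / 2 ^ i) := by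
    refine prod_le_prod (fun p hp => ?_) fun p hp => ?_
    · rw [mem_sdiff, mem_Pm] at hp
      have := two_le_of_prime hp.1.1
      exact div_nonneg (by linarith) (by linarith)
    · rw [mem_sdiff, mem_Pm, mem_Pm] at hp
      have h2 := two_le_of_prime hp.1.1
      have h3 : 2 ^ i + 1 ≤ p := by
        by_contra h
        exact hp.2 ⟨hp.1.1, by omega⟩
      have h4 : (2 : ℝ) ^ i + 1 ≤ p := by exact_mod_cast h3
      have h5 : (p : ℝ) / (p - 1) = 1 / (p - 1) + 1 := by
        rw [eq_comm, div_add_one (by linarith)]; congr 1; ring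
      rw [h5]
      refine le_trans ?_ (Real.add_one_le_exp _)
      have : 1 / ((p : ℝ) - 1) ≤ 1 / 2 ^ i := one_div_le_one_div_of_le (by positivity) (by linarith)
      linarith
  refine h1.trans ?_
  rw [prod_const, ← Real.exp_nat_mul]
  refine Real.exp_le_exp.2 ?_
  have := card_block i
  rw [mul_one_div, div_le_div_iff₀ (by positivity) (by linarith)]
  exact this

lemma V_le (m : ℕ) (hm : 1 ≤ m) : V m ≤ 16 * (m : ℝ) ^ 2 := by
  have h : ∀ m : ℕ, 1 ≤ m → V m ≤ 2 * Real.exp (2 * (harmonic (m - 1) : ℝ)) := by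
    intro m hm
    induction m, hm using Nat.le_induction with
    | base =>
      have : Pm 1 = {2} := by decide
      simp [V, this]; norm_num
    | succ i hi ih =>
      refine (V_succ i hi).trans ?_
      refine (mul_le_mul_of_nonneg_right ih (Real.exp_pos _).le).trans (le_of_eq ?_)
      rw [mul_assoc, ← Real.exp_add]
      congr 2
      have : i + 1 - 1 = (i - 1) + 1 := by omega
      rw [this, harmonic_succ]
      have e : ((i - 1 + 1 : ℕ)) = i := by omega
      rw [e]
      push_cast
      ring
  refine (h m hm).trans ?_
  have hmR : (1 : ℝ) ≤ m := by exact_mod_cast hm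
  have h1 : (harmonic (m - 1) : ℝ) ≤ 1 + Real.log m := by
    have h0 := harmonic_le_one_add_log (m - 1)
    refine h0.trans ?_
    rcases Nat.eq_or_lt_of_le hm with h | h
    · rw [← h]; simp
    · have : Real.log ((m - 1 : ℕ) : ℝ) ≤ Real.log m := by
        refine Real.log_le_log ?_ ?_
        · have : 0 < m - 1 := by omega
          exact_mod_cast this
        · have : m - 1 ≤ m := by omega
          exact_mod_cast this
      linarith
  have h2 : Real.exp (2 * (harmonic (m - 1) : ℝ)) ≤ Real.exp 1 ^ 2 * (m : ℝ) ^ 2 := by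
    have h9 : Real.exp 1 * m = Real.exp (1 + Real.log m) := by
      rw [Real.exp_add, Real.exp_log (by linarith)]
    rw [← mul_pow, h9, ← Real.exp_nat_mul]
    refine Real.exp_le_exp.2 ?_
    push_cast; linarith
  have h3 : Real.exp 1 ^ 2 ≤ 8 := by
    have := Real.exp_one_lt_d9
    have h0 := Real.exp_pos 1
    nlinarith
  have : Real.exp 1 ^ 2 * (m : ℝ) ^ 2 ≤ 8 * (m : ℝ) ^ 2 := by gcongr
  linarith

lemma sum_inv_sq_le (R : ℕ) : ∑ b ∈ Icc 1 R, ((b : ℝ) ^ 2)⁻¹ ≤ 2 := by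
  rcases Nat.eq_zero_or_pos R with rfl | hR
  · simp
  have h := sum_Ioc_inv_sq_le_sub (α := ℝ) (k := 1) (n := R) (by norm_num) hR
  have e : Icc 1 R = insert 1 (Ioc 1 R) := by
    ext x; simp only [mem_Icc, mem_insert, mem_Ioc]; omega
  rw [e, sum_insert (by simp)]
  have : (0 : ℝ) ≤ (R : ℝ)⁻¹ := by positivity
  simp at h ⊢
  linarith

lemma sqfree_sum (R : ℕ) (hR : 1 ≤ R) :
    Real.log R ≤ 2 * ∑ a ∈ (Icc 1 R).filter Squarefree, (a : ℝ)⁻¹ := by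
  have h1 : Real.log R ≤ ∑ n ∈ Icc 1 R, (n : ℝ)⁻¹ := by
    have h := log_add_one_le_harmonic R
    rw [harmonic_eq_sum_Icc] at h
    push_cast at h
    refine le_trans (Real.log_le_log (by exact_mod_cast hR) ?_) h
    linarith
  choose a b hab hsq using Nat.sq_mul_squarefree
  have h2 : ∑ n ∈ Icc 1 R, (n : ℝ)⁻¹ ≤
      ∑ x ∈ ((Icc 1 R).filter Squarefree) ×ˢ Icc 1 R, (x.1 : ℝ)⁻¹ * ((x.2 : ℝ) ^ 2)⁻¹ := by
    have : ∑ n ∈ Icc 1 R, (n : ℝ)⁻¹ = ∑ x ∈ (Icc 1 R).image fun n => (a n, b n),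
        (x.1 : ℝ)⁻¹ * ((x.2 : ℝ) ^ 2)⁻¹ := by
      rw [sum_image]
      · refine sum_congr rfl fun n _ => ?_
        conv_lhs => rw [← hab n]
        push_cast
        rw [mul_inv, mul_comm]
      · intro n _ n' _ h
        simp only [Prod.mk.injEq] at h
        rw [← hab n, ← hab n', h.1, h.2]
    rw [this]
    refine sum_le_sum_of_subset_of_nonneg ?_ fun _ _ _ => by positivity
    intro x hx
    simp only [mem_image, mem_Icc] at hx
    obtain ⟨n, hn, rfl⟩ := hx
    have e := hab n
    have ha : a n ≠ 0 := by rintro h; rw [h] at e; omega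
    have hb : b n ≠ 0 := by rintro h; rw [h] at e; simp at e; omega
    have ha' : a n ≤ n := Nat.le_of_dvd (by omega) ⟨b n ^ 2, by rw [mul_comm]; exact e.symm⟩
    have hb' : b n ≤ n := Nat.le_of_dvd (by omega) ⟨b n * a n, by rw [← mul_assoc, ← sq]; exact e.symm⟩
    simp only [mem_product, mem_filter, mem_Icc]
    refine ⟨⟨⟨by omega, by omega⟩, hsq n⟩, by omega, by omega⟩
  rw [sum_product] at h2
  simp only [← sum_mul_sum] at h2
  have h3 := sum_inv_sq_le R
  have h4 : 0 ≤ ∑ a ∈ (Icc 1 R).filter Squarefree, (a : ℝ)⁻¹ := sum_nonneg fun _ _ => by positivity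
  nlinarith

/-- prime square sums -/
lemma prime_sq_sum (P : Finset ℕ) (z : ℕ) (hz : 1 ≤ z) (hP : ∀ p ∈ P, z < p) :
    ∑ p ∈ P, ((p : ℝ) ^ 2)⁻¹ ≤ 1 / z := by
  have h : P ⊆ Ioc z (max z (P.sup id)) := by
    intro p hp
    rw [mem_Ioc]
    exact ⟨hP p hp, (le_sup (f := id) hp).trans (le_max_right _ _)⟩
  refine (sum_le_sum_of_subset_of_nonneg h fun _ _ _ => by positivity).trans ?_
  refine (sum_Ioc_inv_sq_le_sub (by omega) (le_max_left _ _)).trans ?_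
  have : (0 : ℝ) ≤ ((max z (P.sup id) : ℕ) : ℝ)⁻¹ := by positivity
  rw [one_div]; linarith

noncomputable def wt (K : ℝ) (Q : Finset ℕ) : ℝ := K ^ Q.card / (nn Q : ℝ)

lemma wt_sq (K : ℝ) (Q : Finset ℕ) : wt K Q ^ 2 * 2 ^ Q.card = ∏ p ∈ Q, (2 * K ^ 2 * ((p : ℝ) ^ 2)⁻¹) := by
  unfold wt nn
  rw [prod_mul_distrib, prod_const, prod_inv_distrib, prod_pow]
  push_cast
  rw [div_pow, div_eq_mul_inv, mul_pow, ← pow_mul, ← pow_mul, mul_comm 2 Q.card]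
  ring

lemma wt_total (K : ℝ) (P : Finset ℕ) (hP : ∀ p ∈ P, p.Prime) :
    ∑ Q ∈ P.powerset, wt K Q ^ 2 * 2 ^ Q.card ≤ Real.exp (2 * K ^ 2) := by
  simp only [wt_sq]
  rw [← prod_one_add]
  refine (Real.prod_one_add_le_exp_sum _ (fun p => by positivity)).trans ?_
  refine Real.exp_le_exp.2 ?_
  rw [← mul_sum]
  have := prime_sq_sum P 1 le_rfl (fun p hp => (hP p hp).one_lt)
  simp at this
  nlinarith [sq_nonneg K]

lemma wt_tail (K : ℝ) (P : Finset ℕ) (hP : ∀ p ∈ P, p.Prime) (m : ℕ) :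
    ∑ Q ∈ P.powerset.filter (fun Q => ¬ Q ⊆ Pm m), wt K Q ^ 2 * 2 ^ Q.card ≤
      (2 * K ^ 2 * Real.exp (4 * K ^ 2)) / 2 ^ m := by
  set P1 := P.filter fun p => p ∈ Pm m with hP1
  set P2 := P.filter fun p => ¬ p ∈ Pm m with hP2
  set g : ℕ → ℝ := fun p => 2 * K ^ 2 * ((p : ℝ) ^ 2)⁻¹ with hg
  have e1 : ∑ Q ∈ P.powerset.filter (fun Q => Q ⊆ Pm m), wt K Q ^ 2 * 2 ^ Q.card =
      ∏ p ∈ P1, (1 + g p) := by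
    rw [prod_one_add]
    simp only [wt_sq]
    refine sum_congr ?_ fun _ _ => rfl
    ext Q
    simp only [mem_filter, mem_powerset, hP1, subset_iff]
    constructor
    · rintro ⟨h1, h2⟩ p hp; exact ⟨h1 hp, h2 hp⟩
    · intro h; exact ⟨fun p hp => (h hp).1, fun p hp => (h hp).2⟩
  have e2 : ∑ Q ∈ P.powerset, wt K Q ^ 2 * 2 ^ Q.card = ∏ p ∈ P, (1 + g p) := by
    rw [prod_one_add]; simp only [wt_sq, hg]
  have e3 : ∏ p ∈ P, (1 + g p) = (∏ p ∈ P1, (1 + g p)) * ∏ p ∈ P2, (1 + g p) :=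
    (prod_filter_mul_prod_filter_not P _ _).symm
  have e4 := sum_filter_add_sum_filter_not P.powerset (fun Q => Q ⊆ Pm m)
    (fun Q => wt K Q ^ 2 * 2 ^ Q.card)
  have hg0 : ∀ p, 0 ≤ g p := fun p => by positivity
  have b1 : ∏ p ∈ P1, (1 + g p) ≤ Real.exp (2 * K ^ 2) := by
    rw [← e1]
    refine le_trans ?_ (wt_total K P hP)
    exact sum_le_sum_of_subset_of_nonneg (filter_subset _ _) fun _ _ _ => by positivity
  have b10 : 0 ≤ ∏ p ∈ P1, (1 + g p) := prod_nonneg fun p _ => by linarith [hg0 p]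
  have b2 : ∏ p ∈ P2, (1 + g p) ≤ Real.exp (2 * K ^ 2 / 2 ^ m) := by
    refine (Real.prod_one_add_le_exp_sum _ (fun p => hg0 p)).trans ?_
    refine Real.exp_le_exp.2 ?_
    rw [← mul_sum]
    have := prime_sq_sum P2 (2 ^ m) Nat.one_le_two_pow (fun p hp => by
      simp only [hP2, mem_filter, mem_Pm] at hp
      by_contra h
      exact hp.2 ⟨hP p hp.1, by omega⟩)
    push_cast at this
    calc 2 * K ^ 2 * ∑ p ∈ P2, ((p : ℝ) ^ 2)⁻¹ ≤ 2 * K ^ 2 * (1 / 2 ^ m) := by gcongr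
      _ = _ := by ring
  set x : ℝ := 2 * K ^ 2 / 2 ^ m with hx
  have hx0 : 0 ≤ x := by positivity
  have hx1 : x ≤ 2 * K ^ 2 := div_le_self (by positivity) (one_le_pow₀ (by norm_num))
  have b3 : Real.exp x - 1 ≤ x * Real.exp (2 * K ^ 2) := by
    have h1 : 1 - x ≤ Real.exp (-x) := by linarith [Real.add_one_le_exp (-x)]
    have h2 : Real.exp x * Real.exp (-x) = 1 := by rw [← Real.exp_add]; simp
    have h3 : Real.exp x ≤ Real.exp (2 * K ^ 2) := Real.exp_le_exp.2 hx1
    have h4 := Real.exp_pos x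
    nlinarith
  have : ∑ Q ∈ P.powerset.filter (fun Q => ¬ Q ⊆ Pm m), wt K Q ^ 2 * 2 ^ Q.card =
      (∏ p ∈ P1, (1 + g p)) * (∏ p ∈ P2, (1 + g p) - 1) := by
    rw [e1, e2, e3] at e4
    linarith
  rw [this]
  calc _ ≤ Real.exp (2 * K ^ 2) * (x * Real.exp (2 * K ^ 2)) := by
        refine mul_le_mul b1 (by linarith) ?_ (Real.exp_pos _).le
        have : 1 ≤ ∏ p ∈ P2, (1 + g p) := by
          rw [prod_one_add]
          have := single_le_sum (f := fun Q => ∏ p ∈ Q, g p) (s := P2.powerset)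
            (fun Q _ => prod_nonneg fun p _ => hg0 p) (empty_mem_powerset _)
          simpa using this
        linarith
    _ = _ := by
        have : (4 : ℝ) * K ^ 2 = 2 * K ^ 2 + 2 * K ^ 2 := by ring
        rw [this, Real.exp_add, hx]
        ring

end PM

namespace PM
open Finset

lemma nn_inj {Q Q' : Finset ℕ} (h : ∀ p ∈ Q, p.Prime) (h' : ∀ p ∈ Q', p.Prime)
    (e : nn Q = nn Q') : Q = Q' := by
  have h1 := Nat.primeFactors_prod (s := Q) h
  have h2 := Nat.primeFactors_prod (s := Q') h'
  unfold nn at e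
  rw [← h1, ← h2, e]

lemma two_pow_card_le_nn {Q : Finset ℕ} (h : ∀ p ∈ Q, p.Prime) : 2 ^ Q.card ≤ nn Q :=
  Finset.pow_card_le_prod _ _ _ fun p hp => (h p hp).two_le

lemma wt_nonneg (K : ℝ) (hK : 0 ≤ K) (Q : Finset ℕ) : 0 ≤ wt K Q := by unfold wt; positivity

lemma wt_mono {K K' : ℝ} (hK : 0 ≤ K) (h : K ≤ K') (Q : Finset ℕ) : wt K Q ≤ wt K' Q := by
  unfold wt; gcongr

noncomputable def C0 : ℝ := 8 * (Real.exp 128 + 128 * Real.exp 256) + 12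

lemma C0_pos : 0 < C0 := by unfold C0; positivity

lemma fam (m : ℕ) (D : ℝ) (hD : 0 ≤ D) (𝒬 : Finset (Finset ℕ))
    (h𝒬 : ∀ Q ∈ 𝒬, (∀ p ∈ Q, p.Prime) ∧ nn Q ≤ 2 ^ (8 * m ^ 2)) (c : Finset ℕ → ℝ) (u : ℤ → ℝ)
    (hu : ∀ n, u n = ∑ Q ∈ 𝒬, c Q * chi Q n)
    (hc : ∀ Q ∈ 𝒬, c Q ^ 2 ≤ D * wt 8 Q ^ 2 * (if Q ⊆ Pm m then 1 / 2 ^ m else 1))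
    (E F : Finset ℤ) (N : ℤ → ℕ) (hN : ∀ x ∈ E, 2 ^ (88 * m ^ 2) ≤ N x) :
    (∑ x ∈ E, |avg u (N x) F x|) ^ 2 ≤ F.card * E.card * (D * C0 / 2 ^ m) := by
  classical
  set T : ℕ := 2 ^ (8 * m ^ 2) with hT
  have hN0 : T ^ 10 * 2 ^ m ≤ 2 ^ (88 * m ^ 2) := by
    rw [hT, ← pow_mul, ← pow_add]
    refine Nat.pow_le_pow_right (by norm_num) ?_
    nlinarith [Nat.le_self_pow (two_ne_zero) m]
  have hTpos : 1 ≤ T := Nat.one_le_two_pow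
  have h := max_ineq 𝒬 T (T ^ 10 * 2 ^ m) (Nat.succ_le_of_lt (by positivity))
    ((Nat.le_self_pow (by norm_num) T).trans (Nat.le_mul_of_pos_right _ (by positivity)))
    h𝒬 c u hu E F N (fun x hx => hN0.trans (hN x hx))
  refine h.trans (mul_le_mul_of_nonneg_left ?_ (by positivity))
  set P : Finset ℕ := 𝒬.biUnion id with hP
  have hPp : ∀ p ∈ P, p.Prime := by
    intro p hp
    simp only [hP, mem_biUnion, id] at hp
    obtain ⟨Q, hQ, hpQ⟩ := hp
    exact (h𝒬 Q hQ).1 p hpQ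
  have hQP : 𝒬 ⊆ P.powerset := fun Q hQ => mem_powerset.2 (subset_biUnion_of_mem id hQ)
  have hC : ∑ Q ∈ 𝒬, c Q ^ 2 * 2 ^ Q.card ≤ D * (Real.exp 128 + 128 * Real.exp 256) / 2 ^ m := by
    have h1 : ∑ Q ∈ 𝒬, c Q ^ 2 * 2 ^ Q.card ≤ ∑ Q ∈ P.powerset,
        D * wt 8 Q ^ 2 * (if Q ⊆ Pm m then 1 / 2 ^ m else 1) * 2 ^ Q.card := by
      refine (sum_le_sum fun Q hQ => mul_le_mul_of_nonneg_right (hc Q hQ) (by positivity)).trans ?_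
      refine sum_le_sum_of_subset_of_nonneg hQP fun Q _ _ => ?_
      split_ifs <;> positivity
    refine h1.trans ?_
    rw [← sum_filter_add_sum_filter_not P.powerset (fun Q => Q ⊆ Pm m)]
    have h2 : ∑ Q ∈ P.powerset with Q ⊆ Pm m,
        D * wt 8 Q ^ 2 * (if Q ⊆ Pm m then 1 / 2 ^ m else 1) * 2 ^ Q.card ≤
        D * Real.exp 128 / 2 ^ m := by
      have h3 : ∑ Q ∈ P.powerset with Q ⊆ Pm m, wt 8 Q ^ 2 * 2 ^ Q.card ≤ Real.exp 128 := by
        refine le_trans (sum_le_sum_of_subset_of_nonneg (filter_subset _ _) fun _ _ _ => by positivity)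
          ((wt_total 8 P hPp).trans_eq ?_)
        norm_num
      calc _ = ∑ Q ∈ P.powerset with Q ⊆ Pm m, (D / 2 ^ m) * (wt 8 Q ^ 2 * 2 ^ Q.card) := by
            refine sum_congr rfl fun Q hQ => ?_
            rw [if_pos (mem_filter.1 hQ).2]; ring
        _ = (D / 2 ^ m) * ∑ Q ∈ P.powerset with Q ⊆ Pm m, (wt 8 Q ^ 2 * 2 ^ Q.card) := by
            rw [mul_sum]
        _ ≤ (D / 2 ^ m) * Real.exp 128 := by gcongr
        _ = _ := by ring
    have h4 : ∑ Q ∈ P.powerset with ¬ Q ⊆ Pm m,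
        D * wt 8 Q ^ 2 * (if Q ⊆ Pm m then 1 / 2 ^ m else 1) * 2 ^ Q.card ≤
        D * (128 * Real.exp 256) / 2 ^ m := by
      have h3 := wt_tail 8 P hPp m
      norm_num at h3
      calc _ = ∑ Q ∈ P.powerset with ¬ Q ⊆ Pm m, D * (wt 8 Q ^ 2 * 2 ^ Q.card) := by
            refine sum_congr rfl fun Q hQ => ?_
            rw [if_neg (mem_filter.1 hQ).2]; ring
        _ = D * ∑ Q ∈ P.powerset with ¬ Q ⊆ Pm m, (wt 8 Q ^ 2 * 2 ^ Q.card) := by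
            rw [mul_sum]
        _ ≤ D * (128 * Real.exp 256 / 2 ^ m) := by gcongr
        _ = _ := by ring
    refine (add_le_add h2 h4).trans (le_of_eq ?_)
    ring
  have hcard : (𝒬.card : ℝ) ≤ T := by
    have : 𝒬.card ≤ (Icc 1 T).card := by
      refine card_le_card_of_injOn nn (fun Q hQ => ?_) fun Q hQ Q' hQ' e => ?_
      · simp only [coe_Icc, Set.mem_Icc]
        exact ⟨nn_pos (h𝒬 Q hQ).1, (h𝒬 Q hQ).2⟩
      · exact nn_inj (h𝒬 Q hQ).1 (h𝒬 Q' hQ').1 e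
    simp at this
    exact_mod_cast this
  have hS : (∑ Q ∈ 𝒬, |c Q|) ^ 2 ≤ D * T ^ 6 := by
    have hTR : (1 : ℝ) ≤ T := by exact_mod_cast hTpos
    have h1 : (∑ Q ∈ 𝒬, |c Q|) ^ 2 ≤ 𝒬.card * ∑ Q ∈ 𝒬, |c Q| ^ 2 := sq_sum_le_card_mul_sum_sq
    have h2 : ∀ Q ∈ 𝒬, |c Q| ^ 2 ≤ D * T ^ 4 := by
      intro Q hQ
      rw [sq_abs]
      refine (hc Q hQ).trans ?_
      have hpos : (0 : ℝ) < nn Q := by exact_mod_cast nn_pos (h𝒬 Q hQ).1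
      have h3 : wt 8 Q ≤ (T : ℝ) ^ 2 := by
        unfold wt
        rw [div_le_iff₀ hpos]
        have h4 : (2 : ℝ) ^ Q.card ≤ nn Q := by exact_mod_cast two_pow_card_le_nn (h𝒬 Q hQ).1
        have h5 : (nn Q : ℝ) ≤ T := by exact_mod_cast (h𝒬 Q hQ).2
        have h6 : (8 : ℝ) ^ Q.card = (2 ^ Q.card) ^ 2 * 2 ^ Q.card := by
          rw [← pow_mul, mul_comm Q.card 2, pow_mul, ← mul_pow]; norm_num
        rw [h6]
        gcongr
        exact h4.trans h5
      have h0 : 0 ≤ wt 8 Q := wt_nonneg 8 (by norm_num) Q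
      have h7 : (if Q ⊆ Pm m then 1 / 2 ^ m else 1 : ℝ) ≤ 1 := by
        split_ifs
        · rw [div_le_one (by positivity)]; exact one_le_pow₀ (by norm_num)
        · exact le_rfl
      calc D * wt 8 Q ^ 2 * (if Q ⊆ Pm m then 1 / 2 ^ m else 1) ≤ D * wt 8 Q ^ 2 * 1 := by gcongr
        _ ≤ D * ((T : ℝ) ^ 2) ^ 2 := by rw [mul_one]; gcongr
        _ = _ := by ring
    calc _ ≤ _ := h1
      _ ≤ (T : ℝ) * ∑ Q ∈ 𝒬, (D * T ^ 4) := by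
          gcongr with Q hQ; exact h2 Q hQ
      _ = (T : ℝ) * (𝒬.card * (D * T ^ 4)) := by rw [sum_const, nsmul_eq_mul]
      _ ≤ (T : ℝ) * (T * (D * T ^ 4)) := by gcongr
      _ = _ := by ring
  have hTR : (0 : ℝ) < T := by exact_mod_cast hTpos
  have h12 : 12 * ((∑ Q ∈ 𝒬, |c Q|) ^ 2 * (T : ℝ) ^ 4) / ((T ^ 10 * 2 ^ m : ℕ) : ℝ) ≤ 12 * D / 2 ^ m := by
    push_cast
    rw [div_le_div_iff₀ (by positivity) (by positivity)]
    calc _ ≤ 12 * (D * T ^ 6 * (T : ℝ) ^ 4) * 2 ^ m := by gcongr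
      _ = _ := by ring
  calc _ ≤ 8 * (D * (Real.exp 128 + 128 * Real.exp 256) / 2 ^ m) + 12 * D / 2 ^ m := by
        gcongr
    _ = _ := by unfold C0; ring

noncomputable def dv (A : Finset ℕ) (n : ℤ) : ℝ := ∏ p ∈ A, if (p : ℤ) ∣ n then (1 : ℝ) else 0

lemma dv_expand (A : Finset ℕ) (hA : ∀ p ∈ A, p.Prime) (n : ℤ) :
    dv A n = ∑ Q ∈ A.powerset, chi Q n / nn A := by
  rw [← sum_div]
  unfold chi
  rw [← prod_one_add, dv, nn]
  push_cast
  rw [← prod_div_distrib]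
  refine prod_congr rfl fun p hp => ?_
  have : (2 : ℝ) ≤ p := two_le_of_prime (hA p hp)
  rw [chi1_eq]
  have h : (p : ℝ) ≠ 0 := by linarith
  field_simp
  ring

lemma expand (P : Finset ℕ) (hP : ∀ p ∈ P, p.Prime) (a : Finset ℕ → ℝ) (n : ℤ) :
    ∑ A ∈ P.powerset, a A * dv A n =
      ∑ Q ∈ P.powerset, (∑ A ∈ Icc Q P, a A / nn A) * chi Q n := by
  classical
  have h1 : ∀ A ∈ P.powerset, a A * dv A n = ∑ Q ∈ A.powerset, a A / nn A * chi Q n := by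
    intro A hA
    rw [dv_expand A (fun p hp => hP p (mem_powerset.1 hA hp)), mul_sum]
    refine sum_congr rfl fun Q _ => ?_
    ring
  rw [sum_congr rfl h1]
  simp only [sum_mul]
  refine sum_comm' fun A Q => ?_
  simp only [mem_powerset, mem_Icc]
  constructor
  · rintro ⟨h1, h2⟩; exact ⟨⟨h2, h1⟩, h2.trans h1⟩
  · rintro ⟨⟨h1, h2⟩, _⟩; exact ⟨h2, h1⟩

lemma super_sum (P Q : Finset ℕ) (h : Q ⊆ P) (g : ℕ → ℝ) :
    ∑ A ∈ Icc Q P, ∏ p ∈ A, g p = (∏ p ∈ Q, g p) * ∏ p ∈ P \ Q, (1 + g p) := by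
  classical
  rw [Icc_eq_image_powerset h, sum_image, prod_one_add, mul_sum]
  · refine sum_congr rfl fun B hB => ?_
    rw [prod_union]
    rw [mem_powerset] at hB
    exact disjoint_of_subset_right hB disjoint_sdiff
  · intro B hB B' hB' e
    simp only [coe_powerset, Set.mem_preimage, Set.mem_powerset_iff, coe_subset] at hB hB'
    have d : Disjoint Q B := disjoint_of_subset_right hB disjoint_sdiff
    have d' : Disjoint Q B' := disjoint_of_subset_right hB' disjoint_sdiff
    have := congrArg (· \ Q) e
    simpa [union_sdiff_distrib, sdiff_eq_self_of_disjoint d.symm, sdiff_eq_self_of_disjoint d'.symm] using this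

noncomputable def wc (m : ℕ) (Q : Finset ℕ) : ℝ :=
  ∑ A ∈ Icc Q (Pm m), (if A.card ≤ m then V m * (-1) ^ A.card else 0) / nn A

noncomputable def ec (m : ℕ) (Q : Finset ℕ) : ℝ :=
  ∑ A ∈ Icc Q (Pm m), (if A.card = m + 1 then V m else 0) / nn A

noncomputable def Wb (m : ℕ) (n : ℤ) : ℝ :=
  ∑ A ∈ (Pm m).powerset, (if A.card ≤ m then V m * (-1) ^ A.card else 0) * dv A n

noncomputable def ew (m : ℕ) (n : ℤ) : ℝ :=
  ∑ A ∈ (Pm m).powerset, (if A.card = m + 1 then V m else 0) * dv A n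

noncomputable def del (m : ℕ) : ℝ := V m ^ 3 / 2 ^ m

lemma Pm_prime {m p : ℕ} (h : p ∈ Pm m) : p.Prime := (mem_Pm.1 h).1

lemma Wb_expand (m : ℕ) (n : ℤ) : Wb m n = ∑ Q ∈ (Pm m).powerset, wc m Q * chi Q n :=
  expand _ (fun _ h => Pm_prime h) _ n

lemma ew_expand (m : ℕ) (n : ℤ) : ew m n = ∑ Q ∈ (Pm m).powerset, ec m Q * chi Q n :=
  expand _ (fun _ h => Pm_prime h) _ n

lemma wc_zero_of_card {m : ℕ} {Q : Finset ℕ} (h : m < Q.card) : wc m Q = 0 := by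
  refine sum_eq_zero fun A hA => ?_
  rw [mem_Icc] at hA
  have := card_le_card hA.1
  rw [if_neg (by omega)]; simp

lemma wc_zero_of_not {m : ℕ} {Q : Finset ℕ} (h : ¬ Q ⊆ Pm m) : wc m Q = 0 := by
  refine sum_eq_zero fun A hA => ?_
  rw [mem_Icc] at hA
  exact absurd (hA.1.trans hA.2) h

lemma ec_zero_of_card {m : ℕ} {Q : Finset ℕ} (h : m + 1 < Q.card) : ec m Q = 0 := by
  refine sum_eq_zero fun A hA => ?_
  rw [mem_Icc] at hA
  have := card_le_card hA.1
  rw [if_neg (by omega)]; simp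

/-- Rankin bound -/
lemma rankin (m : ℕ) (Q : Finset ℕ) (hQ : Q ⊆ Pm m) :
    V m * ∑ A ∈ Icc Q (Pm m), (if m < A.card then (nn A : ℝ)⁻¹ else 0) ≤ del m * wt 2 Q := by
  have hV := one_le_V m
  have h1 : ∀ A ∈ Icc Q (Pm m), (if m < A.card then (nn A : ℝ)⁻¹ else 0) ≤
      (∏ p ∈ A, (2 / (p : ℝ))) / 2 ^ m := by
    intro A hA
    have e : ∏ p ∈ A, (2 / (p : ℝ)) = 2 ^ A.card * (nn A : ℝ)⁻¹ := by
      rw [prod_div_distrib, prod_const, nn, div_eq_mul_inv]; push_cast; rfl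
    rw [e]
    split_ifs with h
    · rw [le_div_iff₀ (by positivity), mul_comm]
      refine mul_le_mul_of_nonneg_right ?_ (by positivity)
      exact pow_le_pow_right₀ (by norm_num) h.le
    · positivity
  have h2 : ∏ p ∈ Pm m \ Q, (1 + 2 / (p : ℝ)) ≤ V m ^ 2 := by
    unfold V
    rw [← prod_pow]
    rw [← prod_sdiff hQ (f := fun p : ℕ => ((p : ℝ) / (p - 1)) ^ 2)]
    have h3 : ∏ p ∈ Pm m \ Q, (1 + 2 / (p : ℝ)) ≤ ∏ p ∈ Pm m \ Q, ((p : ℝ) / (p - 1)) ^ 2 := by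
      refine prod_le_prod (fun p _ => by positivity) fun p hp => ?_
      have hp2 := two_le_of_prime (Pm_prime (mem_sdiff.1 hp).1)
      have h0 : (p : ℝ) ≠ 0 := by linarith
      rw [div_pow, le_div_iff₀ (by nlinarith)]
      have : (1 + 2 / (p : ℝ)) * ((p : ℝ) - 1) ^ 2 = ((p : ℝ) ^ 3 - 3 * p + 2) / p := by
        field_simp; ring
      rw [this, div_le_iff₀ (by linarith)]
      nlinarith
    refine h3.trans (le_mul_of_one_le_right (prod_nonneg fun p _ => by positivity) ?_)
    calc (1 : ℝ) = ∏ p ∈ Q, (1 : ℝ) := by simp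
      _ ≤ _ := prod_le_prod (fun _ _ => zero_le_one) fun p hp => by
        have := two_le_of_prime (Pm_prime (hQ hp))
        refine one_le_pow₀ ?_
        rw [one_le_div (by linarith)]; linarith
  have h4 : ∏ p ∈ Q, (2 / (p : ℝ)) = wt 2 Q := by
    rw [prod_div_distrib, prod_const, wt, nn]; push_cast; rfl
  have hw : 0 ≤ wt 2 Q := wt_nonneg 2 (by norm_num) Q
  calc _ ≤ V m * ∑ A ∈ Icc Q (Pm m), (∏ p ∈ A, (2 / (p : ℝ))) / 2 ^ m := by
        gcongr with A hA; exact h1 A hA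
    _ = V m * ((wt 2 Q * ∏ p ∈ Pm m \ Q, (1 + 2 / (p : ℝ))) / 2 ^ m) := by
        rw [← sum_div, super_sum _ _ hQ, h4]
    _ ≤ V m * ((wt 2 Q * V m ^ 2) / 2 ^ m) := by gcongr
    _ = _ := by unfold del; ring

lemma ec_bound (m : ℕ) (Q : Finset ℕ) (hQ : Q ⊆ Pm m) : |ec m Q| ≤ del m * wt 2 Q := by
  have hV := one_le_V m
  have h0 : 0 ≤ ec m Q := sum_nonneg fun A _ => by
    split_ifs
    · positivity
    · simp
  rw [abs_of_nonneg h0]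
  refine le_trans ?_ (rankin m Q hQ)
  unfold ec
  rw [mul_sum]
  refine sum_le_sum fun A _ => ?_
  split_ifs with h1 h2 h2
  · rw [div_eq_mul_inv]
  · omega
  · simp; positivity
  · simp

lemma wc_bound (m : ℕ) (Q : Finset ℕ) (hQ : Q ⊆ Pm m) :
    |wc m Q - (-1) ^ Q.card / phi Q| ≤ del m * wt 2 Q := by
  have hV := one_le_V m
  have hp2 : ∀ p ∈ Pm m, (2 : ℝ) ≤ p := fun p hp => two_le_of_prime (Pm_prime hp)
  have e1 : (-1) ^ Q.card / phi Q = ∑ A ∈ Icc Q (Pm m), V m * (-1) ^ A.card / nn A := by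
    have : ∀ A ∈ Icc Q (Pm m), V m * (-1) ^ A.card / nn A = V m * ∏ p ∈ A, (-1 / (p : ℝ)) := by
      intro A _
      rw [prod_div_distrib, prod_const, nn]; push_cast; ring
    rw [sum_congr rfl this, ← mul_sum, super_sum _ _ hQ]
    have hVe : V m = (∏ p ∈ Pm m \ Q, ((p : ℝ) / (p - 1))) * ∏ p ∈ Q, ((p : ℝ) / (p - 1)) := by
      unfold V; rw [prod_sdiff hQ]
    rw [hVe]
    have h3 : (∏ p ∈ Pm m \ Q, ((p : ℝ) / (p - 1))) * ∏ p ∈ Pm m \ Q, (1 + -1 / (p : ℝ)) = 1 := by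
      rw [← prod_mul_distrib]
      refine prod_eq_one fun p hp => ?_
      have := hp2 p (mem_sdiff.1 hp).1
      have h0 : (p : ℝ) ≠ 0 := by linarith
      have h1 : (p : ℝ) - 1 ≠ 0 := by linarith
      field_simp
      ring
    have h4 : (∏ p ∈ Q, ((p : ℝ) / (p - 1))) * ∏ p ∈ Q, (-1 / (p : ℝ)) = (-1) ^ Q.card / phi Q := by
      rw [← prod_mul_distrib, phi, ← prod_const, ← prod_div_distrib]
      refine prod_congr rfl fun p hp => ?_
      have := hp2 p (hQ hp)
      have h0 : (p : ℝ) ≠ 0 := by linarith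
      have h1 : (p : ℝ) - 1 ≠ 0 := by linarith
      field_simp
    calc _ = ((∏ p ∈ Pm m \ Q, ((p : ℝ) / (p - 1))) * ∏ p ∈ Pm m \ Q, (1 + -1 / (p : ℝ))) *
        ((∏ p ∈ Q, ((p : ℝ) / (p - 1))) * ∏ p ∈ Q, (-1 / (p : ℝ))) := by rw [h3, h4, one_mul]
      _ = _ := by ring
  rw [e1, wc, ← sum_sub_distrib]
  refine (abs_sum_le_sum_abs _ _).trans ?_
  refine le_trans ?_ (rankin m Q hQ)
  rw [mul_sum]
  refine sum_le_sum fun A _ => ?_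
  split_ifs with h1 h2 h2
  · omega
  · simp
  · rw [zero_div, zero_sub, abs_neg, abs_div, abs_mul, abs_pow]
    simp [abs_of_nonneg (by linarith : 0 ≤ V m)]
    rw [div_eq_mul_inv]
  · omega

lemma inv_phi_le (Q : Finset ℕ) (hQ : ∀ p ∈ Q, p.Prime) : 1 / phi Q ≤ wt 2 Q := by
  have : wt 2 Q = ∏ p ∈ Q, (2 / (p : ℝ)) := by
    rw [prod_div_distrib, prod_const, wt, nn]; push_cast; rfl
  rw [this, phi, one_div, ← prod_inv_distrib]
  refine prod_le_prod (fun p hp => ?_) fun p hp => ?_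
  · have := two_le_of_prime (hQ p hp)
    exact inv_nonneg.2 (by linarith)
  · have := two_le_of_prime (hQ p hp)
    rw [inv_eq_one_div, div_le_div_iff₀ (by linarith) (by linarith)]
    linarith

lemma del_nonneg (m : ℕ) : 0 ≤ del m := by
  have := one_le_V m
  unfold del; positivity

lemma wc_le (m : ℕ) (Q : Finset ℕ) (hQ : Q ⊆ Pm m) : |wc m Q| ≤ (1 + del m) * wt 2 Q := by
  have h1 := wc_bound m Q hQ
  have h2 := inv_phi_le Q (fun p hp => Pm_prime (hQ hp))
  have h3 := phi_pos (fun p hp => Pm_prime (hQ hp))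
  have h4 : |(-1) ^ Q.card / phi Q| = 1 / phi Q := by
    rw [abs_div, abs_pow]; simp [abs_of_pos h3]
  have h5 := abs_add_le (wc m Q - (-1) ^ Q.card / phi Q) ((-1) ^ Q.card / phi Q)
  rw [sub_add_cancel] at h5
  linarith

lemma nn_le_pow (m r : ℕ) (Q : Finset ℕ) (hQ : Q ⊆ Pm m) (h : Q.card ≤ r) : nn Q ≤ 2 ^ (m * r) := by
  have : nn Q ≤ (2 ^ m) ^ Q.card := Finset.prod_le_pow_card _ _ _ fun p hp => (mem_Pm.1 (hQ hp)).2
  refine this.trans ?_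
  rw [← pow_mul]
  exact Nat.pow_le_pow_right (by norm_num) (Nat.mul_le_mul_left _ h)

end PM

namespace PM
open Finset

lemma sum_dv (m : ℕ) (f : ℕ → ℝ) (n : ℤ) :
    ∑ A ∈ (Pm m).powerset, f A.card * dv A n =
      ∑ k ∈ range (((Pm m).filter fun p : ℕ => (p : ℤ) ∣ n).card + 1),
        (((Pm m).filter fun p : ℕ => (p : ℤ) ∣ n).card.choose k : ℝ) * f k := by
  classical
  set D := (Pm m).filter fun p : ℕ => (p : ℤ) ∣ n with hD
  have h := sum_powerset_apply_card f (x := D)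
  simp only [nsmul_eq_mul] at h
  rw [← h]
  have hsub : D.powerset ⊆ (Pm m).powerset := powerset_mono.2 (filter_subset _ _)
  rw [← sum_subset hsub]
  · refine sum_congr rfl fun A hA => ?_
    have : dv A n = 1 := prod_eq_one fun p hp => by
      have := (mem_filter.1 (mem_powerset.1 hA hp)).2
      rw [if_pos this]
    rw [this, mul_one]
  · intro A hA hA'
    have : dv A n = 0 := by
      rw [mem_powerset, not_subset] at hA'
      obtain ⟨p, hp, hp'⟩ := hA'
      refine prod_eq_zero hp ?_
      rw [if_neg]
      intro hd
      exact hp' (mem_filter.2 ⟨mem_powerset.1 hA hp, hd⟩)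
    rw [this, mul_zero]

lemma Wb_eq (m : ℕ) (n : ℤ) : Wb m n = V m *
    ((∑ k ∈ range (m + 1), (-1) ^ k * (((Pm m).filter fun p : ℕ => (p : ℤ) ∣ n).card.choose k : ℤ) : ℤ) : ℝ) := by
  unfold Wb
  rw [sum_dv m (fun k => if k ≤ m then V m * (-1) ^ k else 0)]
  set t := ((Pm m).filter fun p : ℕ => (p : ℤ) ∣ n).card
  push_cast
  rw [mul_sum]
  have h1 : ∑ k ∈ range (t + 1), (t.choose k : ℝ) * (if k ≤ m then V m * (-1) ^ k else 0) =
      ∑ k ∈ range (t + 1 + m), (t.choose k : ℝ) * (if k ≤ m then V m * (-1) ^ k else 0) := by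
    refine sum_subset (range_subset_range.2 (by omega)) fun k _ hk => ?_
    rw [mem_range] at hk
    rw [Nat.choose_eq_zero_of_lt (by omega)]; simp
  have h2 : ∑ k ∈ range (m + 1), V m * ((-1) ^ k * (t.choose k : ℝ)) =
      ∑ k ∈ range (m + 1), (t.choose k : ℝ) * (if k ≤ m then V m * (-1) ^ k else 0) := by
    refine sum_congr rfl fun k hk => ?_
    rw [mem_range] at hk
    rw [if_pos (by omega)]; ring
  rw [h1, h2]
  refine (sum_subset (range_subset_range.2 (by omega)) fun k _ hk => ?_).symm
  rw [mem_range] at hk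
  rw [if_neg (by omega), mul_zero]

lemma ew_eq (m : ℕ) (n : ℤ) : ew m n = V m *
    (((Pm m).filter fun p : ℕ => (p : ℤ) ∣ n).card.choose (m + 1) : ℝ) := by
  unfold ew
  rw [sum_dv m (fun k => if k = m + 1 then V m else 0)]
  set t := ((Pm m).filter fun p : ℕ => (p : ℤ) ∣ n).card
  by_cases h : m + 1 ≤ t
  · rw [sum_eq_single (m + 1)]
    · simp; ring
    · intro k _ hk; simp [hk]
    · intro h'; rw [mem_range] at h'; omega
  · rw [Nat.choose_eq_zero_of_lt (by omega)]
    simp only [Nat.cast_zero, mul_zero]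
    refine sum_eq_zero fun k hk => ?_
    rw [mem_range] at hk
    rw [if_neg (by omega), mul_zero]

lemma Wb_of_coprime (m : ℕ) (n : ℤ) (h : ∀ p ∈ Pm m, ¬ (p : ℤ) ∣ n) : Wb m n = V m := by
  rw [Wb_eq]
  have : ((Pm m).filter fun p : ℕ => (p : ℤ) ∣ n) = ∅ := filter_eq_empty_iff.2 (fun p hp => h p hp)
  rw [this, card_empty, sum_eq_single 0]
  · simp
  · intro k _ hk
    rw [Nat.choose_eq_zero_of_lt (by omega)]; simp
  · simp

lemma Wb_bounds (m : ℕ) (hm : Even m) (n : ℤ) : 0 ≤ Wb m n ∧ Wb m n ≤ V m + ew m n := by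
  have hV := one_le_V m
  rw [Wb_eq, ew_eq]
  set t := ((Pm m).filter fun p : ℕ => (p : ℤ) ∣ n).card
  rcases Nat.eq_zero_or_pos t with h | h
  · rw [h, sum_eq_single 0]
    · simp; linarith
    · intro k _ hk
      rw [Nat.choose_eq_zero_of_lt (by omega)]; simp
    · simp
  · obtain ⟨s, hs⟩ : ∃ s, t = s + 1 := ⟨t - 1, by omega⟩
    rw [hs, Int.alternating_sum_range_choose_eq_choose, hm.neg_one_pow]
    constructor
    · simp; positivity
    · rw [Nat.choose_succ_succ]
      push_cast
      have : (0 : ℝ) ≤ V m * (s.choose (m + 1) : ℝ) := by positivity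
      have h3 : s + 1 - 1 = s := rfl
      simp
      nlinarith

lemma exists_D : ∃ D : ℝ, 1 ≤ D ∧ ∀ m : ℕ, 1 ≤ m → del m ^ 2 ≤ D / 2 ^ m ∧ del m ≤ D := by
  have ht := tendsto_pow_const_div_const_pow_of_one_lt 12 (by norm_num : (1 : ℝ) < 2)
  obtain ⟨B, hB⟩ := ht.bddAbove_range
  have hB' : ∀ n : ℕ, (n : ℝ) ^ 12 / 2 ^ n ≤ B := fun n => hB ⟨n, rfl⟩
  refine ⟨max 1 (16 ^ 6 * B), le_max_left _ _, fun m hm => ?_⟩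
  have hV := V_le m hm
  have hV1 := one_le_V m
  have h1 : del m ^ 2 ≤ max 1 (16 ^ 6 * B) / 2 ^ m := by
    unfold del
    have h2 : V m ^ 6 ≤ (16 * (m : ℝ) ^ 2) ^ 6 := by gcongr
    calc (V m ^ 3 / 2 ^ m) ^ 2 = (V m ^ 6 / 2 ^ m) / 2 ^ m := by field_simp
      _ ≤ ((16 * (m : ℝ) ^ 2) ^ 6 / 2 ^ m) / 2 ^ m := by gcongr
      _ = (16 ^ 6 * ((m : ℝ) ^ 12 / 2 ^ m)) / 2 ^ m := by ring
      _ ≤ (16 ^ 6 * B) / 2 ^ m := by gcongr; exact hB' m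
      _ ≤ _ := by gcongr; exact le_max_right _ _
  refine ⟨h1, ?_⟩
  have h2 : max 1 (16 ^ 6 * B) / 2 ^ m ≤ max 1 (16 ^ 6 * B) :=
    div_le_self (by positivity) (one_le_pow₀ (by norm_num))
  have h3 : 1 ≤ max 1 (16 ^ 6 * B) := le_max_left _ _
  have h4 := del_nonneg m
  have h5 := h1.trans h2
  by_contra h
  push Not at h
  have h6 : del m ≤ del m ^ 2 := by nlinarith
  linarith

lemma wt_cmp (Q : Finset ℕ) : wt 2 Q ≤ wt 8 Q := wt_mono (by norm_num) (by norm_num) Q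

lemma fam_e : ∃ C : ℝ, 0 < C ∧ ∀ m : ℕ, 1 ≤ m → ∀ (E F : Finset ℤ) (N : ℤ → ℕ),
    (∀ x ∈ E, 2 ^ (88 * m ^ 2) ≤ N x) →
    (∑ x ∈ E, |avg (ew m) (N x) F x|) ^ 2 ≤ F.card * E.card * (C / 2 ^ m) := by
  obtain ⟨D, hD1, hD⟩ := exists_D
  refine ⟨D * C0, mul_pos (by linarith) C0_pos, fun m hm E F N hN => ?_⟩
  refine fam m D (by linarith) ((Pm m).powerset.filter fun Q => Q.card ≤ m + 1) ?_ (ec m) (ew m) ?_ ?_ E F N hN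
  · intro Q hQ
    rw [mem_filter, mem_powerset] at hQ
    refine ⟨fun p hp => Pm_prime (hQ.1 hp), ?_⟩
    refine (nn_le_pow m (m + 1) Q hQ.1 hQ.2).trans (Nat.pow_le_pow_right (by norm_num) ?_)
    nlinarith
  · intro n
    rw [ew_expand]
    refine (sum_subset (filter_subset _ _) fun Q hQ hQ' => ?_).symm
    rw [ec_zero_of_card, zero_mul]
    by_contra h
    exact hQ' (mem_filter.2 ⟨hQ, by omega⟩)
  · intro Q hQ
    rw [mem_filter, mem_powerset] at hQ
    rw [if_pos hQ.1]
    have h1 := ec_bound m Q hQ.1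
    have h2 := wt_cmp Q
    have h3 := del_nonneg m
    have h4 : 0 ≤ wt 2 Q := wt_nonneg 2 (by norm_num) Q
    rw [← sq_abs]
    calc |ec m Q| ^ 2 ≤ (del m * wt 8 Q) ^ 2 := by gcongr; exact h1.trans (by gcongr)
      _ = del m ^ 2 * wt 8 Q ^ 2 := by ring
      _ ≤ (D / 2 ^ m) * wt 8 Q ^ 2 := by gcongr; exact (hD m hm).1
      _ = _ := by ring

lemma fam_u : ∃ C : ℝ, 0 < C ∧ ∀ m : ℕ, 1 ≤ m → ∀ (E F : Finset ℤ) (N : ℤ → ℕ),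
    (∀ x ∈ E, 2 ^ (88 * m ^ 2) ≤ N x) →
    (∑ x ∈ E, |avg (fun n => Wb (2 * m) n - Wb m n) (N x) F x|) ^ 2 ≤
      F.card * E.card * (C / 2 ^ m) := by
  obtain ⟨D, hD1, hD⟩ := exists_D
  refine ⟨(4 * D + (1 + D) ^ 2) * C0, mul_pos (by positivity) C0_pos, fun m hm E F N hN => ?_⟩
  refine fam m _ (by positivity) ((Pm (2 * m)).powerset.filter fun Q => Q.card ≤ 2 * m) ?_
    (fun Q => wc (2 * m) Q - wc m Q) _ ?_ ?_ E F N hN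
  · intro Q hQ
    rw [mem_filter, mem_powerset] at hQ
    refine ⟨fun p hp => Pm_prime (hQ.1 hp), ?_⟩
    refine (nn_le_pow (2 * m) (2 * m) Q hQ.1 hQ.2).trans (Nat.pow_le_pow_right (by norm_num) ?_)
    nlinarith
  · intro n
    have hs : (Pm m).powerset ⊆ (Pm (2 * m)).powerset := powerset_mono.2 (Pm_mono (by omega))
    have h1 : Wb m n = ∑ Q ∈ (Pm (2 * m)).powerset, wc m Q * chi Q n := by
      rw [Wb_expand]
      refine sum_subset hs fun Q _ hQ => ?_
      rw [mem_powerset] at hQ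
      rw [wc_zero_of_not hQ, zero_mul]
    rw [Wb_expand, h1, ← sum_sub_distrib]
    refine Eq.trans ?_ (sum_subset (filter_subset _ _) fun Q hQ hQ' => ?_).symm
    · refine sum_congr rfl fun Q _ => by ring
    have : 2 * m < Q.card := by
      by_contra h
      exact hQ' (mem_filter.2 ⟨hQ, by omega⟩)
    rw [wc_zero_of_card this, wc_zero_of_card (by omega : m < Q.card)]; simp
  · intro Q hQ
    rw [mem_filter, mem_powerset] at hQ
    have h2 := wt_cmp Q
    have h3 := del_nonneg m
    have h3' := del_nonneg (2 * m)
    have h4 : 0 ≤ wt 2 Q := wt_nonneg 2 (by norm_num) Q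
    have hm2 := hD (2 * m) (by omega)
    have hm1 := hD m hm
    split_ifs with hs
    · have h1 := wc_bound m Q hs
      have h1' := wc_bound (2 * m) Q hQ.1
      have h5 : |wc (2 * m) Q - wc m Q| ≤ (del m + del (2 * m)) * wt 8 Q := by
        have := abs_sub (wc (2 * m) Q - (-1) ^ Q.card / phi Q) (wc m Q - (-1) ^ Q.card / phi Q)
        rw [sub_sub_sub_cancel_right] at this
        calc _ ≤ _ := this
          _ ≤ (del m + del (2 * m)) * wt 2 Q := by linarith
          _ ≤ _ := by gcongr
      have h6 : (del m + del (2 * m)) ^ 2 ≤ 4 * D / 2 ^ m := by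
        have h7 : D / 2 ^ (2 * m) ≤ D / 2 ^ m := by
          gcongr
          · norm_num
          · omega
        have h8 : 4 * D / 2 ^ m = 4 * (D / 2 ^ m) := by ring
        nlinarith [sq_nonneg (del m - del (2 * m))]
      rw [← sq_abs]
      calc _ ≤ ((del m + del (2 * m)) * wt 8 Q) ^ 2 := by gcongr
        _ = (del m + del (2 * m)) ^ 2 * wt 8 Q ^ 2 := by ring
        _ ≤ (4 * D / 2 ^ m) * wt 8 Q ^ 2 := by gcongr
        _ = 4 * D * (wt 8 Q ^ 2 * (1 / 2 ^ m)) := by ring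
        _ ≤ (4 * D + (1 + D) ^ 2) * (wt 8 Q ^ 2 * (1 / 2 ^ m)) := by
            gcongr; nlinarith
        _ = _ := by ring
    · rw [wc_zero_of_not hs, sub_zero, mul_one, ← sq_abs]
      have h1 := wc_le (2 * m) Q hQ.1
      calc _ ≤ ((1 + D) * wt 8 Q) ^ 2 := by
            gcongr
            refine h1.trans ?_
            gcongr
            exact hm2.2
        _ = (1 + D) ^ 2 * wt 8 Q ^ 2 := by ring
        _ ≤ _ := by gcongr; linarith

end PM

namespace PM
open Finset

section selberg
variable (P : Finset ℕ) (R : ℕ)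

def Dd : Finset (Finset ℕ) := P.powerset.filter fun A => nn A ≤ R

noncomputable def Gg : ℝ := ∑ A ∈ Dd P R, 1 / phi A

noncomputable def nu (n : ℤ) : ℝ := ∑ A ∈ Dd P R, (-1) ^ A.card / phi A * chi A n

noncomputable def psi (t : Finset ℕ) : ℝ := ∏ p ∈ t, ((p : ℝ) - 2)

def Ii : Finset (Σ _ : Finset ℕ × Finset ℕ, Finset ℕ) :=
  (Dd P R ×ˢ Dd P R).sigma fun AB => (AB.1 ∩ AB.2).powerset

def ff (i : Σ _ : Finset ℕ × Finset ℕ, Finset ℕ) : Finset ℕ :=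
  ((i.1.1 \ i.1.2) ∪ (i.1.2 \ i.1.1)) ∪ i.2

noncomputable def kk (i : Σ _ : Finset ℕ × Finset ℕ, Finset ℕ) : ℝ :=
  (-1) ^ i.1.1.card / phi i.1.1 * ((-1) ^ i.1.2.card / phi i.1.2) *
    (psi i.2 * phi ((i.1.1 ∩ i.1.2) \ i.2))

noncomputable def sh (Q : Finset ℕ) : ℝ := (∑ i ∈ (Ii P R).filter (fun i => ff i = Q), kk i) / Gg P R

def Ss : Finset (Finset ℕ) := P.powerset.filter fun Q => nn Q ≤ R ^ 2

end selberg

lemma chi_union {A B : Finset ℕ} (h : Disjoint A B) (n : ℤ) : chi (A ∪ B) n = chi A n * chi B n :=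
  prod_union h

lemma phi_union {A B : Finset ℕ} (h : Disjoint A B) : phi (A ∪ B) = phi A * phi B :=
  prod_union h

lemma nn_union {A B : Finset ℕ} (h : Disjoint A B) : nn (A ∪ B) = nn A * nn B :=
  prod_union h

lemma chi_mul (A B : Finset ℕ) (n : ℤ) : chi A n * chi B n =
    ∑ t ∈ (A ∩ B).powerset, psi t * phi ((A ∩ B) \ t) * chi ((A \ B ∪ B \ A) ∪ t) n := by
  have hA : chi A n = chi (A \ B) n * chi (A ∩ B) n := by
    rw [← chi_union (disjoint_sdiff_inter A B), sdiff_union_inter]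
  have hB : chi B n = chi (B \ A) n * chi (A ∩ B) n := by
    rw [inter_comm, ← chi_union (disjoint_sdiff_inter B A), sdiff_union_inter]
  have hsq : chi (A ∩ B) n * chi (A ∩ B) n =
      ∑ t ∈ (A ∩ B).powerset, psi t * phi ((A ∩ B) \ t) * chi t n := by
    have h1 : chi (A ∩ B) n * chi (A ∩ B) n =
        ∏ p ∈ A ∩ B, (((p : ℝ) - 2) * chi1 p n + ((p : ℝ) - 1)) := by
      unfold chi
      rw [← prod_mul_distrib]
      refine prod_congr rfl fun p _ => ?_
      unfold chi1
      split_ifs <;> ring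
    rw [h1, prod_add]
    refine sum_congr rfl fun t _ => ?_
    rw [prod_mul_distrib]
    unfold psi phi chi
    ring
  have hd : Disjoint (A \ B) (B \ A) := disjoint_sdiff_sdiff
  calc chi A n * chi B n = chi (A \ B) n * chi (B \ A) n * (chi (A ∩ B) n * chi (A ∩ B) n) := by
        rw [hA, hB]; ring
    _ = chi (A \ B ∪ B \ A) n *
        ∑ t ∈ (A ∩ B).powerset, psi t * phi ((A ∩ B) \ t) * chi t n := by
        rw [hsq, chi_union hd]
    _ = _ := by
        rw [mul_sum]
        refine sum_congr rfl fun t ht => ?_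
        rw [mem_powerset] at ht
        have : Disjoint (A \ B ∪ B \ A) t := by
          rw [disjoint_left]
          intro p hp hpt
          have := ht hpt
          simp only [mem_union, mem_sdiff, mem_inter] at hp this
          tauto
        rw [chi_union this]
        ring

lemma nu_sq (P : Finset ℕ) (R : ℕ) (n : ℤ) :
    nu P R n ^ 2 = ∑ i ∈ Ii P R, kk i * chi (ff i) n := by
  unfold nu Ii
  rw [sq, sum_mul_sum, ← sum_product', sum_sigma]
  refine sum_congr rfl fun AB _ => ?_
  have : (-1) ^ AB.1.card / phi AB.1 * chi AB.1 n * ((-1) ^ AB.2.card / phi AB.2 * chi AB.2 n) =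
    (-1) ^ AB.1.card / phi AB.1 * ((-1) ^ AB.2.card / phi AB.2) * (chi AB.1 n * chi AB.2 n) := by ring
  rw [this, chi_mul, mul_sum]
  refine sum_congr rfl fun t _ => ?_
  unfold kk ff
  simp only
  ring

lemma mem_Ii {P : Finset ℕ} {R : ℕ} {i : Σ _ : Finset ℕ × Finset ℕ, Finset ℕ} :
    i ∈ Ii P R ↔ (i.1.1 ⊆ P ∧ nn i.1.1 ≤ R) ∧ (i.1.2 ⊆ P ∧ nn i.1.2 ≤ R) ∧ i.2 ⊆ i.1.1 ∩ i.1.2 := by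
  unfold Ii Dd
  simp only [mem_sigma, mem_product, mem_filter, mem_powerset]
  tauto

lemma nn_mono {A B : Finset ℕ} (hB : ∀ p ∈ B, p.Prime) (h : A ⊆ B) : nn A ≤ nn B :=
  prod_le_prod_of_subset_of_one_le' h fun p hp _ => (hB p hp).one_lt.le

lemma ff_mem {P : Finset ℕ} (hP : ∀ p ∈ P, p.Prime) {R : ℕ}
    {i : Σ _ : Finset ℕ × Finset ℕ, Finset ℕ} (hi : i ∈ Ii P R) : ff i ∈ Ss P R := by
  rw [mem_Ii] at hi
  obtain ⟨⟨h1, h1'⟩, ⟨h2, h2'⟩, h3⟩ := hi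
  have hsub : ff i ⊆ i.1.1 ∪ (i.1.2 \ i.1.1) := by
    intro p hp
    have := @h3 p
    simp only [ff, mem_union, mem_sdiff, mem_inter] at hp this ⊢
    tauto
  have hs2 : i.1.1 ∪ (i.1.2 \ i.1.1) ⊆ P := union_subset h1 (sdiff_subset.trans h2)
  refine mem_filter.2 ⟨mem_powerset.2 (hsub.trans hs2), ?_⟩
  refine (nn_mono (fun p hp => hP p (hs2 hp)) hsub).trans ?_
  rw [nn_union disjoint_sdiff, sq]
  refine Nat.mul_le_mul h1' (le_trans (nn_mono (fun p hp => hP p (h2 hp)) sdiff_subset) h2')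

lemma S_expand {P : Finset ℕ} (hP : ∀ p ∈ P, p.Prime) (R : ℕ) (n : ℤ) :
    nu P R n ^ 2 / Gg P R = ∑ Q ∈ Ss P R, sh P R Q * chi Q n := by
  rw [nu_sq, ← sum_fiberwise_of_maps_to (g := ff) (t := Ss P R) (fun i hi => ff_mem hP hi), sum_div]
  refine sum_congr rfl fun Q _ => ?_
  unfold sh
  rw [div_mul_eq_mul_div, sum_mul]
  congr 1
  refine sum_congr rfl fun i hi => ?_
  rw [(mem_filter.1 hi).2]

lemma Gg_pos {P : Finset ℕ} (hP : ∀ p ∈ P, p.Prime) {R : ℕ} (hR : 1 ≤ R) : 0 < Gg P R := by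
  refine sum_pos (fun A hA => ?_) ⟨∅, ?_⟩
  · have := phi_pos (fun p hp => hP p (mem_powerset.1 (mem_filter.1 hA).1 hp))
    positivity
  · exact mem_filter.2 ⟨mem_powerset.2 (empty_subset _), by simpa [nn] using hR⟩

lemma sh_empty {P : Finset ℕ} (hP : ∀ p ∈ P, p.Prime) {R : ℕ} (hR : 1 ≤ R) : sh P R ∅ = 1 := by
  have hG := Gg_pos hP hR
  unfold sh
  rw [div_eq_one_iff_eq hG.ne']
  unfold Gg
  refine sum_bij' (fun i _ => i.1.1) (fun A _ => ⟨(A, A), ∅⟩) ?_ ?_ ?_ ?_ ?_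
  · intro i hi
    have := mem_Ii.1 (mem_filter.1 hi).1
    exact mem_filter.2 ⟨mem_powerset.2 this.1.1, this.1.2⟩
  · intro A hA
    have := mem_filter.1 hA
    rw [mem_powerset] at this
    refine mem_filter.2 ⟨mem_Ii.2 ⟨this, this, by simp⟩, by simp [ff]⟩
  · rintro ⟨⟨A, B⟩, t⟩ hi
    have h := (mem_filter.1 hi).2
    simp only [ff, union_eq_empty, sdiff_eq_empty_iff_subset] at h
    obtain ⟨⟨h1, h2⟩, h3⟩ := h
    have := subset_antisymm h1 h2
    subst this; subst h3
    rfl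
  · intro A _; rfl
  · rintro ⟨⟨A, B⟩, t⟩ hi
    have h := (mem_filter.1 hi).2
    have h0 := mem_Ii.1 (mem_filter.1 hi).1
    simp only [ff, union_eq_empty, sdiff_eq_empty_iff_subset] at h
    obtain ⟨⟨h1, h2⟩, h3⟩ := h
    have := subset_antisymm h1 h2
    subst this; subst h3
    have hp := phi_pos (fun p hp => hP p (h0.1.1 hp))
    simp only at hp
    simp only [kk, inter_self, sdiff_empty, psi, prod_empty]
    have e : ((-1 : ℝ) ^ A.card) * (-1) ^ A.card = 1 := by
      rw [← mul_pow]; simp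
    field_simp
    rw [sq, e]

lemma kk_bound {P : Finset ℕ} (hP : ∀ p ∈ P, p.Prime) {R : ℕ}
    {i : Σ _ : Finset ℕ × Finset ℕ, Finset ℕ} (hi : i ∈ Ii P R) :
    |kk i| ≤ 1 / phi (ff i) * (1 / phi ((i.1.1 ∩ i.1.2) \ i.2)) := by
  obtain ⟨⟨A, B⟩, t⟩ := i
  rw [mem_Ii] at hi
  simp only at hi ⊢
  obtain ⟨⟨h1, -⟩, ⟨h2, -⟩, h3⟩ := hi
  set H := (A ∩ B) \ t with hH
  have htP : t ⊆ P := h3.trans (inter_subset_left.trans h1)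
  have pA := phi_pos (fun p hp => hP p (h1 hp))
  have pB := phi_pos (fun p hp => hP p (h2 hp))
  have pt := phi_pos (fun p hp => hP p (htP hp))
  have pH : 0 < phi H := phi_pos (fun p hp => hP p (h1 (inter_subset_left (sdiff_subset hp))))
  have pAB : 0 < phi (A \ B) := phi_pos (fun p hp => hP p (h1 (sdiff_subset hp)))
  have pBA : 0 < phi (B \ A) := phi_pos (fun p hp => hP p (h2 (sdiff_subset hp)))
  have eI : phi (A ∩ B) = phi t * phi H := by
    rw [hH, ← phi_union disjoint_sdiff, union_sdiff_of_subset h3]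
  have eA : phi A = phi (A \ B) * (phi t * phi H) := by
    rw [← eI, ← phi_union (disjoint_sdiff_inter A B), sdiff_union_inter]
  have eB : phi B = phi (B \ A) * (phi t * phi H) := by
    rw [← eI, inter_comm, ← phi_union (disjoint_sdiff_inter B A), sdiff_union_inter]
  have hd : Disjoint (A \ B ∪ B \ A) t := by
    rw [disjoint_left]
    intro p hp hpt
    have := h3 hpt
    simp only [mem_union, mem_sdiff, mem_inter] at hp this
    tauto
  have eQ : phi (ff ⟨(A, B), t⟩) = phi (A \ B) * phi (B \ A) * phi t := by
    simp only [ff]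
    rw [phi_union hd, phi_union disjoint_sdiff_sdiff]
  have p0 : 0 ≤ psi t := prod_nonneg fun p hp => by
    linarith [two_le_of_prime (hP p (htP hp))]
  have p1 : psi t ≤ phi t := prod_le_prod (fun p hp => by
    linarith [two_le_of_prime (hP p (htP hp))]) fun p _ => by linarith
  have e1 : |kk ⟨(A, B), t⟩| = psi t * phi H / (phi A * phi B) := by
    simp only [kk, abs_mul, abs_div, abs_pow, abs_neg, abs_one, one_pow]
    rw [abs_of_pos pA, abs_of_pos pB, abs_of_nonneg p0, ← hH, abs_of_pos pH]
    field_simp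
  rw [e1, eQ, eA, eB]
  rw [div_mul_div_comm, div_le_div_iff₀ (by positivity) (by positivity)]
  calc _ ≤ phi t * phi H * (phi (A \ B) * phi (B \ A) * phi t * phi H) := by gcongr
    _ = _ := by ring

lemma recon {A B t Q : Finset ℕ} (h3 : t ⊆ A ∩ B) (hf : ff ⟨(A, B), t⟩ = Q) :
    A = (A ∩ Q) ∪ ((A ∩ B) \ t) ∧ B = (B ∩ Q) ∪ ((A ∩ B) \ t) ∧ t = (A ∩ Q) ∩ (B ∩ Q) := by
  subst hf
  refine ⟨?_, ?_, ?_⟩ <;>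
  · ext p
    have := @h3 p
    simp only [ff, mem_union, mem_inter, mem_sdiff] at this ⊢
    tauto

lemma sh_bound {P : Finset ℕ} (hP : ∀ p ∈ P, p.Prime) {R : ℕ} (hR : 1 ≤ R) {Q : Finset ℕ} (hQ : Q ⊆ P) :
    |sh P R Q| ≤ wt 8 Q := by
  have hG := Gg_pos hP hR
  have pQ := phi_pos (fun p hp => hP p (hQ hp))
  unfold sh
  rw [abs_div, abs_of_pos hG, div_le_iff₀ hG]
  have h1 : |∑ i ∈ (Ii P R).filter (fun i => ff i = Q), kk i| ≤
      ∑ i ∈ (Ii P R).filter (fun i => ff i = Q), 1 / phi Q * (1 / phi ((i.1.1 ∩ i.1.2) \ i.2)) := by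
    refine (abs_sum_le_sum_abs _ _).trans (sum_le_sum fun i hi => ?_)
    rw [mem_filter] at hi
    have := kk_bound hP hi.1
    rwa [hi.2] at this
  refine h1.trans ?_
  rw [← mul_sum]
  have h2 : ∑ i ∈ (Ii P R).filter (fun i => ff i = Q), (1 / phi ((i.1.1 ∩ i.1.2) \ i.2)) ≤
      ∑ x ∈ (Q.powerset ×ˢ Q.powerset) ×ˢ Dd P R, 1 / phi x.2 := by
    have hinj : Set.InjOn (fun i : (Σ _ : Finset ℕ × Finset ℕ, Finset ℕ) =>
        ((i.1.1 ∩ Q, i.1.2 ∩ Q), (i.1.1 ∩ i.1.2) \ i.2)) ((Ii P R).filter (fun i => ff i = Q)) := by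
      rintro ⟨⟨A, B⟩, t⟩ hi ⟨⟨A', B'⟩, t'⟩ hi' e
      simp only [mem_coe, mem_filter, mem_Ii] at hi hi'
      obtain ⟨⟨-, -, h3⟩, hf⟩ := hi
      obtain ⟨⟨-, -, h3'⟩, hf'⟩ := hi'
      simp only [Prod.mk.injEq] at e
      obtain ⟨⟨e1, e2⟩, e3⟩ := e
      obtain ⟨r1, r2, r3⟩ := recon h3 hf
      obtain ⟨r1', r2', r3'⟩ := recon h3' hf'
      have eA : A = A' := by rw [r1, r1', e1, e3]
      have eB : B = B' := by rw [r2, r2', e2, e3]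
      have et : t = t' := by rw [r3, r3', e1, e2]
      subst eA; subst eB; subst et; rfl
    rw [← sum_image (f := fun x : (Finset ℕ × Finset ℕ) × Finset ℕ => 1 / phi x.2) hinj]
    refine sum_le_sum_of_subset_of_nonneg ?_ fun x hx _ => ?_
    · intro x hx
      rw [mem_image] at hx
      obtain ⟨i, hi, rfl⟩ := hx
      rw [mem_filter, mem_Ii] at hi
      simp only [mem_product, mem_powerset, inter_subset_right, true_and, Dd, mem_filter]
      have hs : (i.1.1 ∩ i.1.2) \ i.2 ⊆ i.1.1 := sdiff_subset.trans inter_subset_left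
      exact ⟨hs.trans hi.1.1.1, (nn_mono (fun p hp => hP p (hi.1.1.1 hp)) hs).trans hi.1.1.2⟩
    · simp only [mem_product, Dd, mem_filter, mem_powerset] at hx
      have := phi_pos (fun p hp => hP p (hx.2.1 hp))
      positivity
  have h3 : ∑ x ∈ (Q.powerset ×ˢ Q.powerset) ×ˢ Dd P R, 1 / phi x.2 = 4 ^ Q.card * Gg P R := by
    rw [sum_product]
    dsimp only
    rw [sum_const, card_product, card_powerset, Gg, nsmul_eq_mul, ← mul_pow]
    norm_num
  rw [h3] at h2
  have h4 := inv_phi_le Q (fun p hp => hP p (hQ hp))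
  have h5 : wt 8 Q = wt 2 Q * 4 ^ Q.card := by
    unfold wt
    rw [div_mul_eq_mul_div, ← mul_pow]; norm_num
  rw [h5]
  calc _ ≤ 1 / phi Q * (4 ^ Q.card * Gg P R) := by gcongr
    _ ≤ wt 2 Q * (4 ^ Q.card * Gg P R) := by gcongr
    _ = _ := by ring

lemma nu_prime {P : Finset ℕ} {R : ℕ} {q : ℤ} (hq : ∀ p ∈ P, ¬ (p : ℤ) ∣ q) :
    nu P R q = Gg P R := by
  unfold nu Gg
  refine sum_congr rfl fun A hA => ?_
  have : chi A q = (-1) ^ A.card := by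
    unfold chi
    rw [← prod_const]
    refine prod_congr rfl fun p hp => ?_
    rw [chi1, if_neg (hq p (mem_powerset.1 (mem_filter.1 hA).1 hp))]
  rw [this, div_mul_eq_mul_div, ← mul_pow]
  simp

/-- lower bound for `V * G` -/
lemma VG (m : ℕ) : Real.log (2 ^ (m ^ 2)) / 2 ≤ V m * Gg (Pm (m ^ 2) \ Pm m) (2 ^ (m ^ 2)) := by
  have h0 := sqfree_sum (2 ^ (m ^ 2)) Nat.one_le_two_pow
  push_cast at h0
  have hV : V m = ∑ A ∈ (Pm m).powerset, 1 / phi A := by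
    have : V m = ∏ p ∈ Pm m, (1 + 1 / ((p : ℝ) - 1)) := by
      unfold V
      refine prod_congr rfl fun p hp => ?_
      have := two_le_of_prime (Pm_prime hp)
      have h1 : (p : ℝ) - 1 ≠ 0 := by linarith
      field_simp; ring
    rw [this, prod_one_add]
    refine sum_congr rfl fun A _ => ?_
    rw [prod_div_distrib, phi]; simp
  rw [hV, Gg, sum_mul_sum, ← sum_product']
  have hinj : Set.InjOn (fun a : ℕ => (a.primeFactors ∩ Pm m, a.primeFactors \ Pm m))
      (((Icc 1 (2 ^ (m ^ 2) : ℕ)).filter Squarefree : Finset ℕ) : Set ℕ) := by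
    intro a ha b hb e
    simp only [Prod.mk.injEq] at e
    have : a.primeFactors = b.primeFactors := by
      rw [← sdiff_union_inter a.primeFactors (Pm m), ← sdiff_union_inter b.primeFactors (Pm m), e.1, e.2]
    rw [← Nat.prod_primeFactors_of_squarefree (mem_filter.1 ha).2,
      ← Nat.prod_primeFactors_of_squarefree (mem_filter.1 hb).2, this]
  have h1 : ∑ a ∈ (Icc 1 (2 ^ (m ^ 2) : ℕ)).filter Squarefree, (a : ℝ)⁻¹ ≤
      ∑ x ∈ (Pm m).powerset ×ˢ Dd (Pm (m ^ 2) \ Pm m) (2 ^ (m ^ 2)), 1 / phi x.1 * (1 / phi x.2) := by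
    have h2 : ∀ a ∈ (Icc 1 (2 ^ (m ^ 2) : ℕ)).filter Squarefree, (a : ℝ)⁻¹ ≤
        1 / phi (a.primeFactors ∩ Pm m) * (1 / phi (a.primeFactors \ Pm m)) := by
      intro a ha
      have hp : ∀ p ∈ a.primeFactors, p.Prime := fun p hp => Nat.prime_of_mem_primeFactors hp
      have hd : Disjoint (a.primeFactors ∩ Pm m) (a.primeFactors \ Pm m) :=
        (disjoint_sdiff_inter _ _).symm
      rw [div_mul_div_comm, one_mul, ← phi_union hd, union_comm, sdiff_union_inter, one_div]
      have hpos := phi_pos hp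
      refine inv_anti₀ hpos ?_
      conv_rhs => rw [← Nat.prod_primeFactors_of_squarefree (mem_filter.1 ha).2]
      push_cast
      exact prod_le_prod (fun p h => by linarith [two_le_of_prime (hp p h)]) fun p _ => by linarith
    refine (sum_le_sum h2).trans ?_
    rw [← sum_image (f := fun x : Finset ℕ × Finset ℕ => 1 / phi x.1 * (1 / phi x.2)) hinj]
    refine sum_le_sum_of_subset_of_nonneg ?_ fun x hx _ => ?_
    · intro x hx
      rw [mem_image] at hx
      obtain ⟨a, ha, rfl⟩ := hx
      rw [mem_filter, mem_Icc] at ha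
      have hp : ∀ p ∈ a.primeFactors, p.Prime := fun p hp => Nat.prime_of_mem_primeFactors hp
      simp only [mem_product, mem_powerset, inter_subset_right, true_and, Dd, mem_filter]
      refine ⟨sdiff_subset_sdiff (fun p h => ?_) le_rfl, ?_⟩
      · exact mem_Pm.2 ⟨hp p h, (Nat.le_of_mem_primeFactors h).trans ha.1.2⟩
      · refine (nn_mono hp sdiff_subset).trans ?_
        unfold nn
        rw [Nat.prod_primeFactors_of_squarefree ha.2]
        exact ha.1.2
    · simp only [mem_product, Dd, mem_filter, mem_powerset] at hx
      have h1 := phi_pos (fun p hp => Pm_prime (hx.1 hp))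
      have h2 := phi_pos (fun p hp => Pm_prime (sdiff_subset (hx.2.1 hp)))
      positivity
  linarith

noncomputable def Sw (m : ℕ) (n : ℤ) : ℝ :=
  nu (Pm (m ^ 2) \ Pm m) (2 ^ (m ^ 2)) n ^ 2 / Gg (Pm (m ^ 2) \ Pm m) (2 ^ (m ^ 2))

lemma fam_v : ∃ C : ℝ, 0 < C ∧ ∀ m : ℕ, 1 ≤ m → ∀ (E F : Finset ℤ) (N : ℤ → ℕ),
    (∀ x ∈ E, 2 ^ (88 * m ^ 2) ≤ N x) →
    (∑ x ∈ E, |avg (fun n => Wb m n * (Sw m n - 1)) (N x) F x|) ^ 2 ≤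
      F.card * E.card * (C / 2 ^ m) := by
  obtain ⟨D, hD1, hD⟩ := exists_D
  refine ⟨(1 + D) ^ 2 * C0, mul_pos (by positivity) C0_pos, fun m hm E F N hN => ?_⟩
  set P := Pm (m ^ 2) \ Pm m with hP
  set R : ℕ := 2 ^ (m ^ 2) with hR
  have hPp : ∀ p ∈ P, p.Prime := fun p hp => Pm_prime (mem_sdiff.1 hp).1
  have hR1 : 1 ≤ R := Nat.one_le_two_pow
  set I := ((Pm m).powerset.filter fun Q => Q.card ≤ m) ×ˢ ((Ss P R).erase ∅) with hI
  have key : ∀ x ∈ I, (x.1 ⊆ Pm m ∧ x.1.card ≤ m) ∧ (x.2 ≠ ∅ ∧ x.2 ⊆ P ∧ nn x.2 ≤ R ^ 2) ∧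
      Disjoint x.1 x.2 ∧ (x.1 ∪ x.2) ∩ Pm m = x.1 ∧ (x.1 ∪ x.2) \ Pm m = x.2 := by
    intro x hx
    simp only [hI, mem_product, mem_filter, mem_powerset, mem_erase, Ss] at hx
    obtain ⟨h1, h2⟩ := hx
    have hh := h1.1
    have h3 : ∀ p ∈ x.2, p ∉ Pm m := fun p hp => (mem_sdiff.1 (h2.2.1 hp)).2
    refine ⟨h1, h2, ?_, ?_, ?_⟩
    · rw [disjoint_left]
      intro p hp hp'
      exact h3 p hp' (h1.1 hp)
    · ext p
      have := h3 p; have := @hh p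
      simp only [mem_inter, mem_union]
      tauto
    · ext p
      have := h3 p; have := @hh p
      simp only [mem_sdiff, mem_union]
      tauto
  have hinj : Set.InjOn (fun x : Finset ℕ × Finset ℕ => x.1 ∪ x.2) (I : Set (Finset ℕ × Finset ℕ)) := by
    intro x hx y hy e
    have h1 := (key x hx).2.2.2
    have h2 := (key y hy).2.2.2
    simp only at e
    refine Prod.ext ?_ ?_
    · rw [← h1.1, ← h2.1, e]
    · rw [← h1.2, ← h2.2, e]
  refine fam m _ (by positivity) (I.image fun x => x.1 ∪ x.2) ?_
    (fun Q => wc m (Q ∩ Pm m) * sh P R (Q \ Pm m)) _ ?_ ?_ E F N hN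
  · intro Q hQ
    rw [mem_image] at hQ
    obtain ⟨x, hx, rfl⟩ := hQ
    obtain ⟨h1, h2, h3, -, -⟩ := key x hx
    refine ⟨fun p hp => ?_, ?_⟩
    · rcases mem_union.1 hp with h | h
      · exact Pm_prime (h1.1 h)
      · exact hPp p (h2.2.1 h)
    · rw [nn_union h3]
      refine (Nat.mul_le_mul (nn_le_pow m m x.1 h1.1 h1.2) h2.2.2).trans ?_
      rw [hR, ← pow_mul, ← pow_add]
      refine Nat.pow_le_pow_right (by norm_num) ?_
      nlinarith
  · intro n
    rw [sum_image hinj, hI, sum_product]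
    have h1 : Wb m n = ∑ Q ∈ (Pm m).powerset.filter fun Q => Q.card ≤ m, wc m Q * chi Q n := by
      rw [Wb_expand]
      refine (sum_subset (filter_subset _ _) fun Q hQ hQ' => ?_).symm
      rw [wc_zero_of_card, zero_mul]
      by_contra h
      exact hQ' (mem_filter.2 ⟨hQ, by omega⟩)
    have h2 : Sw m n - 1 = ∑ Q ∈ (Ss P R).erase ∅, sh P R Q * chi Q n := by
      unfold Sw
      rw [← hP, ← hR, S_expand hPp]
      have h0 : ∅ ∈ Ss P R := by
        exact mem_filter.2 ⟨mem_powerset.2 (empty_subset _), by simpa [nn] using Nat.one_le_pow 2 _ hR1⟩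
      rw [← add_sum_erase _ _ h0, sh_empty hPp hR1]
      simp only [chi, prod_empty, mul_one, add_sub_cancel_left]
    rw [h1, h2, sum_mul_sum]
    refine sum_congr rfl fun Q1 hQ1 => sum_congr rfl fun Q2 hQ2 => ?_
    obtain ⟨-, -, h3, h4, h5⟩ := key (Q1, Q2) (mem_product.2 ⟨hQ1, hQ2⟩)
    simp only at h3 h4 h5
    rw [h4, h5, chi_union h3]
    ring
  · intro Q hQ
    rw [mem_image] at hQ
    obtain ⟨x, hx, rfl⟩ := hQ
    obtain ⟨h1, h2, h3, h4, h5⟩ := key x hx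
    rw [h4, h5]
    have hns : ¬ (x.1 ∪ x.2 ⊆ Pm m) := by
      intro h
      rw [sdiff_eq_empty_iff_subset.2 h] at h5
      exact h2.1 h5.symm
    rw [if_neg hns, mul_one]
    have b1 := wc_le m x.1 h1.1
    have b2 := sh_bound hPp hR1 h2.2.1
    have b3 := wt_cmp x.1
    have b4 : 0 ≤ wt 8 x.1 := wt_nonneg 8 (by norm_num) _
    have b5 : wt 8 (x.1 ∪ x.2) = wt 8 x.1 * wt 8 x.2 := by
      unfold wt
      rw [nn_union h3, card_union_of_disjoint h3, pow_add]
      push_cast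
      rw [mul_div_mul_comm]
    have b6 := del_nonneg m
    have b8 : 0 ≤ wt 2 x.1 := wt_nonneg 2 (by norm_num) _
    have b7 : |wc m x.1| ≤ (1 + D) * wt 8 x.1 := by
      refine b1.trans ?_
      have := (hD m hm).2
      gcongr
    rw [← sq_abs, abs_mul, b5]
    calc _ ≤ ((1 + D) * wt 8 x.1 * wt 8 x.2) ^ 2 := by gcongr
      _ = _ := by ring

end PM

namespace PM
open Finset

lemma theta_eq (N : ℕ) : theta N = Chebyshev.theta N := by
  rw [Chebyshev.theta_eq_sum_primesLE_log]
  unfold theta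
  refine sum_congr ?_ fun _ _ => rfl
  ext p
  simp [primesUpTo, Nat.mem_primesLE, and_comm]

lemma theta_lower : ∃ c : ℝ, 0 < c ∧ c ≤ 1 ∧ ∀ n : ℕ, 1 ≤ n → c * 2 ^ n ≤ theta (2 ^ n) := by
  have hl2 : 0 < Real.log 2 := Real.log_pos (by norm_num)
  have hl21 : Real.log 2 ≤ 1 := by linarith [Real.log_two_lt_d9]
  have hs2 : 1 < Real.sqrt 2 := by
    rw [Real.lt_sqrt (by norm_num)]; norm_num
  have ht := tendsto_pow_const_div_const_pow_of_one_lt 1 hs2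
  have hev : ∀ᶠ n : ℕ in Filter.atTop, (n : ℝ) ^ 1 / Real.sqrt 2 ^ n < 1 / 16 :=
    ht.eventually (gt_mem_nhds (by norm_num))
  obtain ⟨n0, hn0⟩ := Filter.eventually_atTop.1 hev
  have hbig : ∀ n : ℕ, max n0 1 ≤ n → Real.log 2 / 2 * 2 ^ n ≤ theta (2 ^ n) := by
    intro n hn
    have h1 := hn0 n ((le_max_left _ _).trans hn)
    have hn1 : 1 ≤ n := (le_max_right _ _).trans hn
    have hn1R : (1 : ℝ) ≤ n := by exact_mod_cast hn1
    rw [theta_eq]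
    refine le_trans ?_ (Chebyshev.theta_ge (2 ^ n))
    push_cast
    set s := Real.sqrt 2 ^ n with hs
    have hs1 : 1 ≤ s := one_le_pow₀ hs2.le
    have hss : (2 : ℝ) ^ n = s ^ 2 := by
      rw [hs, ← pow_mul, mul_comm n 2, pow_mul, Real.sq_sqrt (by norm_num)]
    have hsq : Real.sqrt ((2 : ℝ) ^ n) = s := by rw [hss, Real.sqrt_sq (by linarith)]
    rw [pow_one, div_lt_iff₀ (by linarith)] at h1
    have h2 : Real.log ((2 : ℝ) ^ n + 1) ≤ (n + 1) * Real.log 2 := by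
      have : (2 : ℝ) ^ n + 1 ≤ 2 ^ (n + 1) := by
        rw [pow_succ]; linarith [one_le_pow₀ (n := n) (by norm_num : (1 : ℝ) ≤ 2)]
      refine (Real.log_le_log (by positivity) this).trans (le_of_eq ?_)
      rw [Real.log_pow]; push_cast; ring
    rw [hsq, Real.log_pow, hss]
    have h3 : (n + 1) * Real.log 2 ≤ 2 * n * Real.log 2 := by gcongr; linarith
    have h4 : 2 * s * (n * Real.log 2) ≤ 2 * s * ((1 / 16 * s) * Real.log 2) := by gcongr
    have h5 : 2 * (n : ℝ) * Real.log 2 ≤ 2 * (1 / 16 * s) * Real.log 2 := by gcongr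
    have h6 : s * Real.log 2 ≤ s ^ 2 * Real.log 2 := by gcongr; nlinarith
    rw [hss] at h2
    nlinarith
  have hsmall : ∀ k : ℕ, ∃ c : ℝ, 0 < c ∧ c ≤ 1 ∧ ∀ n : ℕ, 1 ≤ n → n < k → c * 2 ^ n ≤ theta (2 ^ n) := by
    intro k
    induction k with
    | zero => exact ⟨1, one_pos, le_rfl, fun n _ h => by omega⟩
    | succ k ih =>
      obtain ⟨c, hc, hc1, h⟩ := ih
      rcases Nat.eq_zero_or_pos k with rfl | hk
      · exact ⟨1, one_pos, le_rfl, fun n _ h => by omega⟩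
      have hpos : 0 < theta (2 ^ k) := by
        rw [theta_eq]
        refine Chebyshev.theta_pos ?_
        have : 2 ^ 1 ≤ 2 ^ k := Nat.pow_le_pow_right (by norm_num) hk
        exact_mod_cast this
      refine ⟨min c (theta (2 ^ k) / 2 ^ k), lt_min hc (by positivity), (min_le_left _ _).trans hc1,
        fun n hn hnk => ?_⟩
      rcases Nat.lt_succ_iff_lt_or_eq.1 hnk with h' | h'
      · refine le_trans ?_ (h n hn h')
        gcongr; exact min_le_left _ _
      · subst h'
        rw [← le_div_iff₀ (by positivity)]
        exact min_le_right _ _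
  obtain ⟨c, hc, hc1, h⟩ := hsmall (max n0 1)
  refine ⟨min c (Real.log 2 / 2), lt_min hc (by positivity), (min_le_left _ _).trans hc1, fun n hn => ?_⟩
  rcases lt_or_ge n (max n0 1) with h' | h'
  · refine le_trans ?_ (h n hn h')
    gcongr; exact min_le_left _ _
  · refine le_trans ?_ (hbig n h')
    gcongr; exact min_le_right _ _

noncomputable def LL (n : ℤ) : ℝ := if n.toNat.Prime then Real.log n else 0

noncomputable def win (N : ℕ) (F : Finset ℤ) (x : ℤ) : Finset ℤ := F.filter fun y => x < y ∧ y ≤ x + N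

lemma avg_win (u : ℤ → ℝ) (N : ℕ) (F : Finset ℤ) (x : ℤ) :
    avg u N F x = (∑ y ∈ win N F x, u (y - x)) / N := by
  unfold avg win
  rw [sum_filter]

lemma wpa_eq (F : Finset ℤ) (N : ℕ) (x : ℤ) :
    ∑ p ∈ primesUpTo N, (F : Set ℤ).indicator (1 : ℤ → ℝ) (x + p) * Real.log p =
      ∑ y ∈ win N F x, LL (y - x) := by
  have h1 : ∑ p ∈ primesUpTo N, (F : Set ℤ).indicator (1 : ℤ → ℝ) (x + p) * Real.log p =
      ∑ p ∈ (primesUpTo N).filter (fun p : ℕ => x + p ∈ F), Real.log p := by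
    rw [sum_filter]
    refine sum_congr rfl fun p _ => ?_
    by_cases h : x + (p : ℤ) ∈ F
    · simp [h]
    · simp [h]
  have h2 : ∑ y ∈ win N F x, LL (y - x) =
      ∑ y ∈ (win N F x).filter (fun y => (y - x).toNat.Prime), Real.log ((y - x : ℤ) : ℝ) := by
    rw [sum_filter]; rfl
  rw [h1, h2]
  refine sum_bij' (fun (p : ℕ) _ => x + (p : ℤ)) (fun y _ => (y - x).toNat) ?_ ?_ ?_ ?_ ?_
  · intro p hp
    simp only [primesUpTo, mem_filter, mem_range, win] at hp ⊢
    obtain ⟨⟨h1, h2⟩, h3⟩ := hp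
    have := h2.pos
    refine ⟨⟨h3, by omega, by omega⟩, ?_⟩
    have : (x + (p : ℤ) - x).toNat = p := by omega
    rwa [this]
  · intro y hy
    simp only [primesUpTo, mem_filter, mem_range, win] at hy ⊢
    obtain ⟨⟨h1, h2, h3⟩, h4⟩ := hy
    refine ⟨⟨by omega, h4⟩, ?_⟩
    have : x + ((y - x).toNat : ℤ) = y := by omega
    rwa [this]
  · intro p _; omega
  · intro y hy
    simp only [mem_filter, win] at hy
    omega
  · intro p _
    simp

lemma LL_nonneg (n : ℤ) : 0 ≤ LL n := by
  unfold LL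
  split_ifs with h
  · have : 0 < n.toNat := h.pos
    have : (1 : ℤ) ≤ n := by omega
    exact Real.log_nonneg (by exact_mod_cast this)
  · exact le_rfl

lemma wpa_theta (F : Finset ℤ) (N : ℕ) (hN : 2 ≤ N) (x : ℤ) (l : ℝ)
    (h : l < weightedPrimeAvg ((F : Set ℤ).indicator 1) N x) :
    l * theta N < ∑ y ∈ win N F x, LL (y - x) := by
  have hpos : 0 < theta N := by
    rw [theta_eq]; exact Chebyshev.theta_pos (by exact_mod_cast hN)
  unfold weightedPrimeAvg at h
  rw [wpa_eq, inv_mul_eq_div, lt_div_iff₀ hpos] at h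
  exact h

lemma wpa_le_one (F : Finset ℤ) (N : ℕ) (hN : 2 ≤ N) (x : ℤ) :
    weightedPrimeAvg ((F : Set ℤ).indicator 1) N x ≤ 1 := by
  have hpos : 0 < theta N := by
    rw [theta_eq]; exact Chebyshev.theta_pos (by exact_mod_cast hN)
  unfold weightedPrimeAvg
  rw [inv_mul_eq_div, div_le_one hpos]
  refine sum_le_sum fun p hp => ?_
  have h0 : 0 ≤ Real.log p := Real.log_natCast_nonneg p
  have : (F : Set ℤ).indicator (1 : ℤ → ℝ) (x + p) ≤ 1 := by
    refine Set.indicator_le_self' (by simp) _ |>.trans (by simp)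
  nlinarith

/-- trivial bound for small N -/
lemma small_bound (F : Finset ℤ) (n : ℕ) (x : ℤ) :
    ∑ y ∈ win (2 ^ n) F x, LL (y - x) ≤ n * (win (2 ^ n) F x).card := by
  have : ∀ y ∈ win (2 ^ n) F x, LL (y - x) ≤ n := by
    intro y hy
    simp only [win, mem_filter] at hy
    unfold LL
    split_ifs
    · have h1 : (1 : ℤ) ≤ y - x := by omega
      have h2 : y - x ≤ ((2 ^ n : ℕ) : ℤ) := by omega
      have h3 : ((y - x : ℤ) : ℝ) ≤ 2 ^ n := by exact_mod_cast h2
      have h4 : (0 : ℝ) < ((y - x : ℤ) : ℝ) := by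
        have : (0 : ℤ) < y - x := by omega
        exact_mod_cast this
      refine (Real.log_le_log h4 h3).trans ?_
      rw [Real.log_pow]
      have := Real.log_two_lt_d9
      have h0 : (0 : ℝ) ≤ n := by positivity
      nlinarith
    · positivity
  refine (sum_le_sum this).trans (le_of_eq ?_)
  rw [sum_const, nsmul_eq_mul, mul_comm]

lemma Sw_nonneg (m : ℕ) (n : ℤ) : 0 ≤ Sw m n := by
  have := Gg_pos (P := Pm (m ^ 2) \ Pm m) (fun p hp => Pm_prime (mem_sdiff.1 hp).1)
    (R := 2 ^ (m ^ 2)) Nat.one_le_two_pow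
  unfold Sw; positivity

lemma B_prime (m : ℕ) (hm : 1 ≤ m) (q : ℕ) (hq : q.Prime) (hqR : 2 ^ (m ^ 2) < q) :
    Real.log (2 ^ (m ^ 2)) / 2 ≤ Wb m q * Sw m q := by
  have hmm : Pm m ⊆ Pm (m ^ 2) := Pm_mono (Nat.le_self_pow two_ne_zero m)
  have hnd : ∀ p ∈ Pm (m ^ 2), ¬ (p : ℤ) ∣ (q : ℤ) := by
    intro p hp hd
    rw [Int.natCast_dvd_natCast, Nat.prime_dvd_prime_iff_eq (Pm_prime hp) hq] at hd
    have := (mem_Pm.1 hp).2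
    omega
  rw [Wb_of_coprime m q (fun p hp => hnd p (hmm hp))]
  unfold Sw
  rw [nu_prime (fun p hp => hnd p (mem_sdiff.1 hp).1)]
  have hG := Gg_pos (P := Pm (m ^ 2) \ Pm m) (fun p hp => Pm_prime (mem_sdiff.1 hp).1)
    (R := 2 ^ (m ^ 2)) Nat.one_le_two_pow
  have hV := VG m
  generalize Gg (Pm (m ^ 2) \ Pm m) (2 ^ (m ^ 2)) = G at hG hV ⊢
  have e : G ^ 2 / G = G := by rw [pow_two, mul_div_assoc, div_self hG.ne', mul_one]
  rw [e]
  exact hV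

/-- sieve bound -/
lemma big_bound (F : Finset ℤ) (m n : ℕ) (hm : 1 ≤ m) (hme : Even m) (hn : n ≤ 352 * m ^ 2) (x : ℤ) :
    ∑ y ∈ win (2 ^ n) F x, LL (y - x) ≤
      2 * 2 ^ (m ^ 2) + 704 * ∑ y ∈ win (2 ^ n) F x, Wb m (y - x) * Sw m (y - x) := by
  have h0 : ∀ k : ℤ, 0 ≤ Wb m k * Sw m k := fun k => mul_nonneg (Wb_bounds m hme k).1 (Sw_nonneg m k)
  have h1 : ∀ y ∈ win (2 ^ n) F x, LL (y - x) ≤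
      (if y ≤ x + (2 ^ (m ^ 2) : ℕ) then LL (y - x) else 0) + 704 * (Wb m (y - x) * Sw m (y - x)) := by
    intro y hy
    simp only [win, mem_filter] at hy
    split_ifs with h
    · linarith [h0 (y - x)]
    · rw [zero_add]
      unfold LL
      split_ifs with hp
      · have e : ((y - x).toNat : ℤ) = y - x := by omega
        have hb := B_prime m hm _ hp (by generalize (2 ^ (m ^ 2) : ℕ) = R at h ⊢; omega)
        rw [e] at hb
        have h2 : y - x ≤ ((2 ^ n : ℕ) : ℤ) := by omega
        have h3 : ((y - x : ℤ) : ℝ) ≤ 2 ^ n := by exact_mod_cast h2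
        have h4 : (0 : ℝ) < ((y - x : ℤ) : ℝ) := by
          have : (0 : ℤ) < y - x := by omega
          exact_mod_cast this
        have h5 := Real.log_le_log h4 h3
        rw [Real.log_pow] at h5 hb
        push_cast at hb
        have hl2 : 0 < Real.log 2 := Real.log_pos (by norm_num)
        have h6 : (n : ℝ) ≤ 352 * (m : ℝ) ^ 2 := by exact_mod_cast hn
        have h7 : (n : ℝ) * Real.log 2 ≤ 352 * (m : ℝ) ^ 2 * Real.log 2 := by gcongr
        linarith
      · have := h0 (y - x); positivity
  refine (sum_le_sum h1).trans ?_
  rw [sum_add_distrib, ← mul_sum]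
  refine add_le_add_left ?_ _ |>.trans le_rfl
  have h2 : ∑ y ∈ win (2 ^ n) F x, (if y ≤ x + (2 ^ (m ^ 2) : ℕ) then LL (y - x) else 0) ≤
      ∑ y ∈ win (2 ^ (m ^ 2)) F x, LL (y - x) := by
    rw [← sum_filter]
    refine sum_le_sum_of_subset_of_nonneg (fun y hy => ?_) fun _ _ _ => LL_nonneg _
    simp only [win, mem_filter] at hy ⊢
    exact ⟨hy.1.1, hy.1.2.1, hy.2⟩
  refine h2.trans ?_
  rw [← wpa_eq]
  have h3 : ∑ p ∈ primesUpTo (2 ^ (m ^ 2)), (F : Set ℤ).indicator (1 : ℤ → ℝ) (x + p) * Real.log p ≤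
      theta (2 ^ (m ^ 2)) := by
    refine sum_le_sum fun p hp => ?_
    have h0 : 0 ≤ Real.log p := Real.log_natCast_nonneg p
    have : (F : Set ℤ).indicator (1 : ℤ → ℝ) (x + p) ≤ 1 := by
      refine Set.indicator_le_self' (by simp) _ |>.trans (by simp)
    nlinarith
  refine h3.trans ?_
  rw [theta_eq]
  refine (Chebyshev.theta_le_log4_mul_x (by positivity)).trans ?_
  push_cast
  have : Real.log 4 ≤ 2 := by
    have : Real.log 4 = 2 * Real.log 2 := by
      rw [show (4 : ℝ) = 2 ^ 2 by norm_num, Real.log_pow]; norm_num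
    linarith [Real.log_two_lt_d9]
  gcongr

end PM

namespace PM
open Finset

lemma fam_sum (u : ℕ → ℤ → ℝ) (C : ℝ) (hC : 0 < C)
    (hfam : ∀ m : ℕ, 1 ≤ m → ∀ (E F : Finset ℤ) (N : ℤ → ℕ),
      (∀ x ∈ E, 2 ^ (88 * m ^ 2) ≤ N x) →
      (∑ x ∈ E, |avg (u m) (N x) F x|) ^ 2 ≤ F.card * E.card * (C / 2 ^ m))
    (h : ℕ) (hh : 1 ≤ h) (E F : Finset ℤ) (N : ℤ → ℕ) (J : ℤ → Finset ℕ)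
    (hJ : ∀ x ∈ E, ∀ j ∈ J x, 2 ^ (88 * (2 ^ j * (2 * h)) ^ 2) ≤ N x) :
    ∑ x ∈ E, ∑ j ∈ J x, |avg (u (2 ^ j * (2 * h))) (N x) F x| ≤
      Real.sqrt (F.card * E.card) * (2 * Real.sqrt C * (1 / 2) ^ h) := by
  classical
  have e1 : ∑ x ∈ E, ∑ j ∈ J x, |avg (u (2 ^ j * (2 * h))) (N x) F x| =
      ∑ j ∈ E.biUnion J, ∑ x ∈ E.filter (fun x => j ∈ J x),
        |avg (u (2 ^ j * (2 * h))) (N x) F x| := by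
    apply sum_comm'
    intro x j
    simp only [mem_biUnion, mem_filter]
    constructor
    · rintro ⟨a, b⟩; exact ⟨⟨a, b⟩, x, a, b⟩
    · rintro ⟨⟨a, b⟩, _⟩; exact ⟨a, b⟩
  rw [e1]
  have e2 : ∀ j ∈ E.biUnion J, ∑ x ∈ E.filter (fun x => j ∈ J x),
        |avg (u (2 ^ j * (2 * h))) (N x) F x| ≤
        Real.sqrt (F.card * E.card) * (Real.sqrt C * (1 / 2) ^ h) * (1 / 2) ^ j := by
    intro j _
    have hm : 1 ≤ 2 ^ j * (2 * h) := Nat.mul_pos (by positivity) (by omega)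
    have h1 := hfam _ hm (E.filter (fun x => j ∈ J x)) F N (fun x hx => by
      rw [mem_filter] at hx; exact hJ x hx.1 j hx.2)
    refine le_of_sq_le_sq ?_ (by positivity)
    refine h1.trans ?_
    rw [mul_pow, mul_pow, mul_pow, Real.sq_sqrt (by positivity), Real.sq_sqrt hC.le]
    have h2 : ((E.filter (fun x => j ∈ J x)).card : ℝ) ≤ E.card := by
      exact_mod_cast card_filter_le _ _
    have h3 : (1 : ℝ) / 2 ^ (2 ^ j * (2 * h)) ≤ ((1 / 2) ^ h) ^ 2 * ((1 / 2) ^ j) ^ 2 := by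
      rw [← one_div_pow, ← mul_pow, ← pow_add, ← pow_mul]
      apply pow_le_pow_of_le_one (by norm_num) (by norm_num)
      have : j + 1 ≤ 2 ^ j := Nat.lt_two_pow_self
      nlinarith [Nat.mul_le_mul_right h this, Nat.mul_le_mul_left j hh]
    calc (F.card : ℝ) * (E.filter (fun x => j ∈ J x)).card * (C / 2 ^ (2 ^ j * (2 * h)))
        ≤ (F.card : ℝ) * E.card * (C / 2 ^ (2 ^ j * (2 * h))) := by gcongr
      _ = (F.card : ℝ) * E.card * C * (1 / 2 ^ (2 ^ j * (2 * h))) := by ring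
      _ ≤ (F.card : ℝ) * E.card * C * (((1 / 2) ^ h) ^ 2 * ((1 / 2) ^ j) ^ 2) := by gcongr
      _ = _ := by ring
  refine (sum_le_sum e2).trans ?_
  rw [← mul_sum]
  have h4 : ∑ j ∈ E.biUnion J, (1 / 2 : ℝ) ^ j ≤ 2 := by
    have := summable_geometric_two.sum_le_tsum (E.biUnion J) (fun _ _ => by positivity)
    rwa [tsum_geometric_two] at this
  calc _ ≤ Real.sqrt (F.card * E.card) * (Real.sqrt C * (1 / 2) ^ h) * 2 := by gcongr
    _ = _ := by ring

lemma tele (m0 i : ℕ) (k : ℤ) : Wb (2 ^ i * m0) k = Wb m0 k +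
    ∑ j ∈ range i, (Wb (2 * (2 ^ j * m0)) k - Wb (2 ^ j * m0) k) := by
  induction i with
  | zero => simp
  | succ i ih =>
    rw [sum_range_succ, ← add_assoc, ← ih]
    rw [show 2 ^ (i + 1) * m0 = 2 * (2 ^ i * m0) by ring]
    ring

/-- small scales -/
lemma small_set (c : ℝ) (hc0 : 0 < c) (hc : ∀ n ≥ 1, c * 2 ^ n ≤ theta (2 ^ n)) (l : ℝ) (hl0 : 0 < l)
    (M : ℕ) (hM : 1 ≤ M) (E F : Finset ℤ) (n : ℤ → ℕ)
    (hE : ∀ x ∈ E, 1 ≤ n x ∧ n x ≤ M ∧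
      l < weightedPrimeAvg ((F : Set ℤ).indicator 1) (2 ^ n x) x) :
    l * c / M * E.card ≤ F.card := by
  have hMp : (0 : ℝ) < M := by exact_mod_cast hM
  apply hl (l * c / M) E.card E F (fun x => 2 ^ n x) rfl
  · intro x _; exact Nat.one_le_two_pow
  · intro x hx
    obtain ⟨h1, h2, h3⟩ := hE x hx
    have h4 := wpa_theta F (2 ^ n x) (by
      calc 2 = 2 ^ 1 := rfl
        _ ≤ _ := Nat.pow_le_pow_right (by norm_num) h1) x l h3
    have h5 := small_bound F (n x) x
    have h6 := hc (n x) h1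
    have h7 : l * (c * 2 ^ n x) ≤ l * theta (2 ^ n x) := by gcongr
    have h8 : (n x : ℝ) * (win (2 ^ n x) F x).card ≤ M * (win (2 ^ n x) F x).card := by gcongr
    change _ ≤ ((win (2 ^ n x) F x).card : ℝ)
    push_cast
    rw [div_mul_eq_mul_div, div_le_iff₀ hMp]
    linarith

/-- pointwise decomposition at large scales -/
lemma big_pt (c : ℝ) (hc0 : 0 < c) (hc : ∀ n ≥ 1, c * 2 ^ n ≤ theta (2 ^ n)) (l : ℝ) (hl0 : 0 < l)
    (m0 : ℕ) (hm0 : 1 ≤ m0) (hev : Even m0) (hlc : 4 ≤ l * c * 2 ^ m0) (F : Finset ℤ)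
    (i n : ℕ) (hn1 : 88 * (2 ^ i * m0) ^ 2 ≤ n) (hn2 : n ≤ 352 * (2 ^ i * m0) ^ 2) (x : ℤ)
    (hx : l < weightedPrimeAvg ((F : Set ℤ).indicator 1) (2 ^ n) x) :
    c / 1408 * l ≤ V m0 * (win (2 ^ n) F x).card / ((2 ^ n : ℕ) : ℝ) + (|avg (ew m0) (2 ^ n) F x| +
      ∑ j ∈ range i, |avg (fun k => Wb (2 * (2 ^ j * m0)) k - Wb (2 ^ j * m0) k) (2 ^ n) F x| +
      |avg (fun k => Wb (2 ^ i * m0) k * (Sw (2 ^ i * m0) k - 1)) (2 ^ n) F x|) := by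
  set m := 2 ^ i * m0 with hm
  have hm1 : 1 ≤ m := Nat.mul_pos (by positivity) (by omega)
  have hm0m : m0 ≤ m := Nat.le_mul_of_pos_left _ (by positivity)
  have hme : Even m := hev.mul_left _
  have hmm : m ≤ m ^ 2 := Nat.le_self_pow two_ne_zero m
  have hn : 1 ≤ n := by omega
  have h4 := wpa_theta F (2 ^ n) (by
      calc 2 = 2 ^ 1 := rfl
        _ ≤ _ := Nat.pow_le_pow_right (by norm_num) hn) x l hx
  have h5 := big_bound F m n hm1 hme hn2 x
  have h7 : l * (c * 2 ^ n) ≤ l * theta (2 ^ n) := by gcongr; exact hc n hn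
  have h8 : (2 : ℝ) * 2 ^ (m ^ 2) ≤ l * c * 2 ^ n / 2 := by
    have : (2 : ℝ) ^ (m ^ 2) * 2 ^ m0 ≤ 2 ^ n := by
      rw [← pow_add]; exact pow_le_pow_right₀ (by norm_num) (by omega)
    have h9 : l * c * (2 ^ (m ^ 2) * 2 ^ m0) ≤ l * c * 2 ^ n := by gcongr
    have h10 : (2 : ℝ) ^ (m ^ 2) * 4 ≤ 2 ^ (m ^ 2) * (l * c * 2 ^ m0) := by gcongr
    linarith
  have hN : (0 : ℝ) < ((2 ^ n : ℕ) : ℝ) := by positivity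
  have h9 : c / 1408 * l ≤ (∑ y ∈ win (2 ^ n) F x, Wb m (y - x) * Sw m (y - x)) / ((2 ^ n : ℕ) : ℝ) := by
    rw [le_div_iff₀ hN]
    push_cast
    linarith
  refine h9.trans ?_
  have e1 : ∀ k, Wb m k * Sw m k ≤ V m0 + ew m0 k +
      ∑ j ∈ range i, (Wb (2 * (2 ^ j * m0)) k - Wb (2 ^ j * m0) k) +
      Wb m k * (Sw m k - 1) := by
    intro k
    have := tele m0 i k
    rw [← hm] at this
    have h2 := (Wb_bounds m0 hev k).2
    linarith
  have e2 : (∑ y ∈ win (2 ^ n) F x, Wb m (y - x) * Sw m (y - x)) / ((2 ^ n : ℕ) : ℝ) ≤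
      V m0 * (win (2 ^ n) F x).card / ((2 ^ n : ℕ) : ℝ) + avg (ew m0) (2 ^ n) F x +
      ∑ j ∈ range i, avg (fun k => Wb (2 * (2 ^ j * m0)) k - Wb (2 ^ j * m0) k) (2 ^ n) F x +
      avg (fun k => Wb m k * (Sw m k - 1)) (2 ^ n) F x := by
    simp only [avg_win]
    rw [← sum_div, ← add_div, ← add_div, ← add_div]
    apply div_le_div_of_nonneg_right _ hN.le
    refine (sum_le_sum fun y _ => e1 (y - x)).trans (le_of_eq ?_)
    rw [sum_add_distrib, sum_add_distrib, sum_add_distrib, sum_const, nsmul_eq_mul, sum_comm,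
      mul_comm (V m0)]
  refine e2.trans ?_
  have a1 := le_abs_self (avg (ew m0) (2 ^ n) F x)
  have a2 := le_abs_self (avg (fun k => Wb m k * (Sw m k - 1)) (2 ^ n) F x)
  have a3 : ∑ j ∈ range i, avg (fun k => Wb (2 * (2 ^ j * m0)) k - Wb (2 ^ j * m0) k) (2 ^ n) F x ≤
    ∑ j ∈ range i, |avg (fun k => Wb (2 * (2 ^ j * m0)) k - Wb (2 ^ j * m0) k) (2 ^ n) F x| :=
    sum_le_sum fun _ _ => le_abs_self _
  linarith

/-- the error part -/
lemma err_set : ∃ K : ℝ, 0 < K ∧ ∀ (h : ℕ), 1 ≤ h → ∀ (E F : Finset ℤ) (n i : ℤ → ℕ) (a : ℝ), 0 < a →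
    (∀ x ∈ E, 88 * (2 ^ i x * (2 * h)) ^ 2 ≤ n x) →
    (∀ x ∈ E, a ≤ |avg (ew (2 * h)) (2 ^ n x) F x| +
      ∑ j ∈ range (i x), |avg (fun k => Wb (2 * (2 ^ j * (2 * h))) k - Wb (2 ^ j * (2 * h)) k) (2 ^ n x) F x| +
      |avg (fun k => Wb (2 ^ i x * (2 * h)) k * (Sw (2 ^ i x * (2 * h)) k - 1)) (2 ^ n x) F x|) →
    a ^ 2 * E.card ≤ F.card * (K * (1 / 2) ^ (2 * h)) := by
  obtain ⟨Ce, hCe, he⟩ := fam_e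
  obtain ⟨Cu, hCu, hu⟩ := fam_u
  obtain ⟨Cv, hCv, hv⟩ := fam_v
  set A := 2 * Real.sqrt Ce + 2 * Real.sqrt Cu + 2 * Real.sqrt Cv with hA
  have hA0 : 0 < A := by positivity
  refine ⟨A ^ 2, by positivity, ?_⟩
  intro h hh E F n i a ha hn hE
  have hpow : ∀ x ∈ E, ∀ j ≤ i x, 2 ^ (88 * (2 ^ j * (2 * h)) ^ 2) ≤ 2 ^ n x := by
    intro x hx j hj
    refine Nat.pow_le_pow_right (by norm_num) (le_trans ?_ (hn x hx))
    have : 2 ^ j ≤ 2 ^ i x := Nat.pow_le_pow_right (by norm_num) hj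
    gcongr
  have s1 := fam_sum ew Ce hCe he h hh E F (fun x => 2 ^ n x) (fun _ => {0})
    (fun x hx j hj => hpow x hx j (by simp at hj; omega))
  have s2 := fam_sum (fun m k => Wb (2 * m) k - Wb m k) Cu hCu hu h hh E F (fun x => 2 ^ n x)
    (fun x => range (i x)) (fun x hx j hj => hpow x hx j (by simp at hj; omega))
  have s3 := fam_sum (fun m k => Wb m k * (Sw m k - 1)) Cv hCv hv h hh E F (fun x => 2 ^ n x)
    (fun x => {i x}) (fun x hx j hj => hpow x hx j (by simp at hj; omega))
  simp only [sum_singleton, pow_zero, one_mul] at s1 s3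
  have s4 := sum_le_sum hE
  rw [sum_const, nsmul_eq_mul, sum_add_distrib, sum_add_distrib] at s4
  have s5 : E.card * a ≤ Real.sqrt (F.card * E.card) * (A * (1 / 2) ^ h) := by
    rw [hA]
    have : Real.sqrt (F.card * E.card) * ((2 * Real.sqrt Ce + 2 * Real.sqrt Cu + 2 * Real.sqrt Cv) * (1 / 2) ^ h)
      = Real.sqrt (F.card * E.card) * (2 * Real.sqrt Ce * (1 / 2) ^ h) +
       Real.sqrt (F.card * E.card) * (2 * Real.sqrt Cu * (1 / 2) ^ h) +
       Real.sqrt (F.card * E.card) * (2 * Real.sqrt Cv * (1 / 2) ^ h) := by ring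
    rw [this]
    linarith
  have s6 := pow_le_pow_left₀ (by positivity) s5 2
  rw [mul_pow, mul_pow, mul_pow, Real.sq_sqrt (by positivity), ← pow_mul] at s6
  rcases Nat.eq_zero_or_pos E.card with h0 | h0
  · rw [h0]; simp; positivity
  · have hp : (0 : ℝ) < E.card := by exact_mod_cast h0
    rw [mul_comm h 2] at s6
    have : (E.card : ℝ) * (a ^ 2 * E.card) ≤ E.card * (F.card * (A ^ 2 * (1 / 2) ^ (2 * h))) := by linarith
    exact le_of_mul_le_mul_left this hp

end PM

namespace PM
open Finset

lemma level_pow (c l : ℝ) (hc0 : 0 < c) (hc1 : c ≤ 1) (hl0 : 0 < l) (hl1 : l < 1) :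
    ∃ h : ℕ, 1 ≤ h ∧ 4 ≤ l * c * 2 ^ (2 * h) ∧
      ((2 * h : ℕ) : ℝ) ≤ (2 * (1 + Real.log (4 / c)) / Real.log 2) * (1 + Real.log (1 / l)) := by
  have hl2 : 0 < Real.log 2 := Real.log_pos (by norm_num)
  have hL : 0 ≤ Real.log (1 / l) := Real.log_nonneg (by rw [le_div_iff₀ hl0]; linarith)
  have h4 : Real.log 4 = 2 * Real.log 2 := by
    rw [show (4 : ℝ) = 2 ^ 2 by norm_num, Real.log_pow]; norm_num
  have hc4 : 2 * Real.log 2 ≤ Real.log (4 / c) := by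
    rw [← h4]; apply Real.log_le_log (by norm_num); rw [le_div_iff₀ hc0]; linarith
  obtain ⟨k, hk1, hk2⟩ := exists_nat_pow_near
    (show 1 ≤ (Real.log (1 / l) + Real.log (4 / c)) / Real.log 2 by
      rw [le_div_iff₀ hl2]; linarith) (show (1 : ℝ) < 2 by norm_num)
  refine ⟨2 ^ k, Nat.one_le_two_pow, ?_, ?_⟩
  · rw [div_lt_iff₀ hl2, ← Real.log_mul (by positivity) (by positivity)] at hk2
    have h5 : (2 : ℝ) ^ (k + 1) * Real.log 2 = Real.log (2 ^ (2 * 2 ^ k)) := by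
      rw [Real.log_pow]; push_cast; ring
    rw [h5] at hk2
    have h6 := (Real.log_lt_log_iff (by positivity) (by positivity)).1 hk2
    have h7 : 1 / l * (4 / c) = 4 / (l * c) := by field_simp
    rw [h7, div_lt_iff₀ (by positivity)] at h6
    linarith
  · push_cast
    rw [le_div_iff₀ hl2] at hk1
    rw [div_mul_eq_mul_div, le_div_iff₀ hl2]
    nlinarith [mul_nonneg hL (show 0 ≤ Real.log (4 / c) by linarith)]

lemma scale_exists (m0 n : ℕ) (hm0 : 1 ≤ m0) (hn : 88 * m0 ^ 2 ≤ n) :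
    ∃ i : ℕ, 88 * (2 ^ i * m0) ^ 2 ≤ n ∧ n ≤ 352 * (2 ^ i * m0) ^ 2 := by
  have hp : 0 < 88 * m0 ^ 2 := by positivity
  set q := n / (88 * m0 ^ 2) with hq
  have hq1 : 1 ≤ q := (Nat.one_le_div_iff hp).2 hn
  refine ⟨Nat.log 4 q, ?_, ?_⟩
  · have h1 := Nat.pow_log_le_self 4 (show q ≠ 0 by omega)
    have h2 : q * (88 * m0 ^ 2) ≤ n := Nat.div_mul_le_self _ _
    calc 88 * (2 ^ Nat.log 4 q * m0) ^ 2 = (2 ^ 2) ^ Nat.log 4 q * (88 * m0 ^ 2) := by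
          rw [← pow_mul, mul_pow, ← pow_mul, mul_comm 2]; ring
      _ ≤ q * (88 * m0 ^ 2) := Nat.mul_le_mul_right _ h1
      _ ≤ n := h2
  · have h1 := Nat.lt_pow_succ_log_self (show 1 < 4 by norm_num) q
    have h2 := (Nat.div_lt_iff_lt_mul hp).1 (hq ▸ h1)
    refine h2.le.trans (le_of_eq ?_)
    rw [pow_succ, show (4 : ℕ) = 2 ^ 2 by norm_num, ← pow_mul, mul_pow, ← pow_mul, mul_comm 2]; ring

lemma main_level : ∃ C : ℝ, 0 < C ∧ ∀ (F : Finset ℤ) (l : ℝ), 0 < l → l < 1 → ∀ E : Finset ℤ,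
    (∀ x ∈ E, ∃ n : ℕ, 1 ≤ n ∧ l < weightedPrimeAvg ((F : Set ℤ).indicator 1) (2 ^ n) x) →
    l * E.card ≤ C * (1 + Real.log (1 / l)) ^ 2 * F.card := by
  classical
  obtain ⟨c, hc0, hc1, hc⟩ := theta_lower
  obtain ⟨K, hK, herr⟩ := err_set
  set D := 2 * (1 + Real.log (4 / c)) / Real.log 2 with hD
  set κ := c / 1408 with hκ
  have hκ0 : 0 < κ := by positivity
  refine ⟨88 * D ^ 2 / c + 32 * D ^ 2 / κ + 4 * K / κ ^ 2, by positivity, ?_⟩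
  intro F l hl0 hl1 E hE
  have hL : 0 ≤ Real.log (1 / l) := Real.log_nonneg (by rw [le_div_iff₀ hl0]; linarith)
  obtain ⟨h, hh, hlc, hm0D⟩ := level_pow c l hc0 hc1 hl0 hl1
  rw [← hD] at hm0D
  choose! n hn using hE
  have hm1 : 1 ≤ 2 * h := by omega
  have hi : ∀ x : ℤ, ∃ i : ℕ, 88 * (2 * h) ^ 2 ≤ n x →
      88 * (2 ^ i * (2 * h)) ^ 2 ≤ n x ∧ n x ≤ 352 * (2 ^ i * (2 * h)) ^ 2 := by
    intro x
    by_cases hx : 88 * (2 * h) ^ 2 ≤ n x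
    · obtain ⟨i, hi⟩ := scale_exists (2 * h) (n x) hm1 hx
      exact ⟨i, fun _ => hi⟩
    · exact ⟨0, fun h => absurd h hx⟩
  choose i hi using hi
  set M := 88 * (2 * h) ^ 2 with hM
  set LL2 := (1 + Real.log (1 / l)) ^ 2 with hLL2
  have hLL1 : 1 ≤ LL2 := by rw [hLL2]; nlinarith
  have hm0sq : (((2 * h : ℕ) : ℝ)) ^ 2 ≤ D ^ 2 * LL2 := by
    rw [hLL2, ← mul_pow]; exact pow_le_pow_left₀ (by positivity) hm0D 2
  have hMr : (M : ℝ) = 88 * ((2 * h : ℕ) : ℝ) ^ 2 := by rw [hM]; push_cast; ring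
  have hV1 := one_le_V (2 * h)
  have hV2 := V_le (2 * h) hm1
  set Vh := V (2 * h) with hVh
  let P : ℤ → Prop := fun x => κ * l / 2 ≤ Vh * (win (2 ^ n x) F x).card / ((2 ^ n x : ℕ) : ℝ)
  set E0 := E.filter (fun x => n x < M) with hE0
  set E1 := (E.filter (fun x => ¬ n x < M)).filter P with hE1
  set E2 := (E.filter (fun x => ¬ n x < M)).filter (fun x => ¬ P x) with hE2
  have hcard : (E.card : ℝ) = E0.card + (E1.card + E2.card) := by
    have a1 := card_filter_add_card_filter_not (s := E) (fun x => n x < M)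
    have a2 := card_filter_add_card_filter_not (s := E.filter (fun x => ¬ n x < M)) P
    rw [← a1, ← a2]; push_cast; rfl
  have b0 : l * E0.card ≤ 88 * D ^ 2 / c * LL2 * F.card := by
    have := small_set c hc0 hc l hl0 M (Nat.succ_le_of_lt (by rw [hM]; positivity)) E0 F n (by
      intro x hx
      rw [hE0, mem_filter] at hx
      exact ⟨(hn x hx.1).1, hx.2.le, (hn x hx.1).2⟩)
    have hMp : (0 : ℝ) < M := by rw [hMr]; positivity
    rw [div_mul_eq_mul_div, div_le_iff₀ hMp] at this
    have h3 : (F.card : ℝ) * M ≤ F.card * (88 * (D ^ 2 * LL2)) := by rw [hMr]; gcongr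
    rw [div_mul_eq_mul_div, div_mul_eq_mul_div, le_div_iff₀ hc0]
    linarith
  have b1 : l * E1.card ≤ 32 * D ^ 2 / κ * LL2 * F.card := by
    have := hl (κ * l / (2 * Vh)) E1.card E1 F (fun x => 2 ^ n x) rfl
      (fun x _ => Nat.one_le_two_pow) (by
      intro x hx
      rw [hE1, mem_filter] at hx
      have hp := hx.2
      simp only [P] at hp
      rw [le_div_iff₀ (by positivity)] at hp
      rw [div_mul_eq_mul_div, div_le_iff₀ (by positivity)]
      simp only [win] at hp
      linarith)
    rw [div_mul_eq_mul_div, div_le_iff₀ (by positivity)] at this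
    have h3 : (F.card : ℝ) * (2 * Vh) ≤ F.card * (2 * (16 * (D ^ 2 * LL2))) := by
      have : Vh ≤ 16 * (D ^ 2 * LL2) := by linarith
      gcongr
    rw [div_mul_eq_mul_div, div_mul_eq_mul_div, le_div_iff₀ hκ0]
    linarith
  have b2 : l * E2.card ≤ 4 * K / κ ^ 2 * LL2 * F.card := by
    have hmem : ∀ x ∈ E2, x ∈ E ∧ M ≤ n x ∧ ¬ P x := by
      intro x hx
      rw [hE2, mem_filter, mem_filter] at hx
      exact ⟨hx.1.1, by omega, hx.2⟩
    have := herr h hh E2 F n i (κ * l / 2) (by positivity)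
      (fun x hx => (hi x (hmem x hx).2.1).1) (by
      intro x hx
      obtain ⟨x1, x2, x3⟩ := hmem x hx
      have := big_pt c hc0 hc l hl0 (2 * h) hm1 (even_two_mul h) hlc F (i x) (n x) (hi x x2).1 (hi x x2).2 x
        (hn x x1).2
      simp only [P, not_le] at x3
      rw [← hVh, ← hκ] at this
      linarith)
    have h3 : ((1 : ℝ) / 2) ^ (2 * h) ≤ l := by
      rw [one_div_pow, div_le_iff₀ (by positivity)]
      have : l * c * 2 ^ (2 * h) ≤ l * 1 * 2 ^ (2 * h) := by gcongr
      linarith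
    have h4 : (F.card : ℝ) * (K * (1 / 2) ^ (2 * h)) ≤ F.card * (K * l) := by gcongr
    have h5 : l * (κ ^ 2 * (l * E2.card)) ≤ l * (4 * K * F.card) := by nlinarith
    have h6 := le_of_mul_le_mul_left h5 hl0
    have h7 : 4 * K * F.card * 1 ≤ 4 * K * F.card * LL2 := by gcongr
    rw [div_mul_eq_mul_div, div_mul_eq_mul_div, le_div_iff₀ (by positivity)]
    linarith
  rw [hcard]
  linarith

lemma final_calc (C : ℝ) (hC : 0 < C) (l p E F : ℝ) (hl0 : 0 < l) (hl1 : l < 1) (hp : 1 < p) (hE : 0 ≤ E)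
    (hF : 0 ≤ F) (h : l * E ≤ C * (1 + Real.log (1 / l)) ^ 2 * F) :
    l * E ^ (1 / p) ≤ (2 * C + 1) * Real.exp 1 * (p - 1) ^ (-(2 / p)) * F ^ (1 / p) := by
  set L := Real.log (1 / l) with hLd
  have hL : 0 ≤ L := Real.log_nonneg (by rw [le_div_iff₀ hl0]; linarith)
  have hs : 0 < p - 1 := by linarith
  have hp0 : 0 < p := by linarith
  have e1 : l ^ p = Real.exp (-((p - 1) * L)) * l := by
    have : l ^ p = l ^ (p - 1) * l := by
      rw [Real.rpow_sub_one hl0.ne']; field_simp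
    rw [this, Real.rpow_def_of_pos hl0]
    congr 2
    rw [hLd, one_div, Real.log_inv]; ring
  have e2 : l ^ p * E ≤ (2 * C + 1) * Real.exp 1 ^ p * (p - 1) ^ (-2 : ℝ) * F := by
    have q := Real.quadratic_le_exp_of_nonneg (show 0 ≤ (p - 1) * (1 + L) by positivity)
    have q1 : ((p - 1) * (1 + L)) ^ 2 ≤ 2 * Real.exp ((p - 1) * (1 + L)) := by
      have : 0 ≤ (p - 1) * (1 + L) := by positivity
      linarith
    have q2 : Real.exp (-((p - 1) * L)) * ((p - 1) * (1 + L)) ^ 2 ≤ 2 * Real.exp 1 ^ p := by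
      rw [Real.exp_one_rpow]
      calc _ ≤ Real.exp (-((p - 1) * L)) * (2 * Real.exp ((p - 1) * (1 + L))) := by gcongr
        _ = 2 * (Real.exp (-((p - 1) * L)) * Real.exp ((p - 1) * (1 + L))) := by ring
        _ = 2 * Real.exp (p - 1) := by rw [← Real.exp_add]; ring_nf
        _ ≤ 2 * Real.exp p := by gcongr; linarith
    have e3 : (p - 1) ^ (-2 : ℝ) = 1 / (p - 1) ^ 2 := by
      rw [Real.rpow_neg hs.le, one_div]; norm_num
    rw [e1, e3]
    have hs2 : 0 < (p - 1) ^ 2 := by positivity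
    have : (2 * C + 1) * Real.exp 1 ^ p * (1 / (p - 1) ^ 2) * F =
      (2 * C + 1) * Real.exp 1 ^ p * F / (p - 1) ^ 2 := by ring
    rw [this, le_div_iff₀ hs2]
    calc Real.exp (-((p - 1) * L)) * l * E * (p - 1) ^ 2
        = Real.exp (-((p - 1) * L)) * (p - 1) ^ 2 * (l * E) := by ring
      _ ≤ Real.exp (-((p - 1) * L)) * (p - 1) ^ 2 * (C * (1 + L) ^ 2 * F) := by gcongr
      _ = Real.exp (-((p - 1) * L)) * ((p - 1) * (1 + L)) ^ 2 * (C * F) := by ring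
      _ ≤ 2 * Real.exp 1 ^ p * (C * F) := by gcongr
      _ = (2 * C) * Real.exp 1 ^ p * F := by ring
      _ ≤ _ := by gcongr; linarith
  have e4 := Real.rpow_le_rpow (by positivity) e2 (show 0 ≤ 1 / p by positivity)
  have hpp : p * (1 / p) = 1 := by field_simp
  rw [Real.mul_rpow (by positivity) hE, ← Real.rpow_mul hl0.le, hpp, Real.rpow_one,
    Real.mul_rpow (by positivity) hF, Real.mul_rpow (by positivity) (by positivity),
    Real.mul_rpow (by positivity) (by positivity), ← Real.rpow_mul (by positivity), hpp, Real.rpow_one,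
    ← Real.rpow_mul hs.le, show (-2 : ℝ) * (1 / p) = -(2 / p) by ring] at e4
  refine e4.trans ?_
  have : (2 * C + 1) ^ (1 / p) ≤ 2 * C + 1 := by
    apply Real.rpow_le_self_of_one_le (by linarith)
    rw [div_le_one hp0]; exact hp.le
  gcongr

end PM

/-- Restricted weak type `(p₀, p₀)` inequality, uniform in `p₀ ∈ (1, ∞)` up to the factor
`(p₀ − 1)^{−2/p₀}`, for the maximal function of the weighted averages along the primes. -/
theorem stmt_19 :
    ∃ C : ℝ, 0 < C ∧
      ∀ (F : Finset ℤ) (p₀ : ℝ), 1 < p₀ →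
        ∀ l : ℝ, 0 < l →
          {x : ℤ | ∃ n : ℕ, 1 ≤ n ∧
              l < weightedPrimeAvg ((F : Set ℤ).indicator 1) (2 ^ n) x}.Finite ∧
          l * (({x : ℤ | ∃ n : ℕ, 1 ≤ n ∧
              l < weightedPrimeAvg ((F : Set ℤ).indicator 1) (2 ^ n) x}.ncard : ℝ)) ^ (1 / p₀) ≤
            C * (p₀ - 1) ^ (-(2 / p₀)) * ((F.card : ℝ)) ^ (1 / p₀) := by
  obtain ⟨C, hC, hmain⟩ := PM.main_level
  refine ⟨(2 * C + 1) * Real.exp 1, by positivity, ?_⟩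
  intro F p hp l hl0
  set S := {x : ℤ | ∃ n : ℕ, 1 ≤ n ∧
              l < weightedPrimeAvg ((F : Set ℤ).indicator 1) (2 ^ n) x} with hS
  have hp1 : 0 ≤ p - 1 := by linarith
  have hp0 : 0 < p := by linarith
  rcases lt_or_ge l 1 with hl1 | hl1
  · have hfin : S.Finite := by
      by_contra hinf
      set B := C * (1 + Real.log (1 / l)) ^ 2 * F.card / l with hB
      obtain ⟨k, hk⟩ := exists_nat_gt B
      obtain ⟨t, ht, htc⟩ := Set.Infinite.exists_subset_card_eq hinf k
      have := hmain F l hl0 hl1 t (fun x hx => ht hx)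
      rw [htc] at this
      rw [hB, div_lt_iff₀ hl0] at hk
      linarith
    refine ⟨hfin, ?_⟩
    have h1 := hmain F l hl0 hl1 hfin.toFinset (fun x hx => by
      rw [Set.Finite.mem_toFinset] at hx; exact hx)
    rw [← Set.ncard_eq_toFinset_card S hfin] at h1
    exact PM.final_calc C hC l p _ _ hl0 hl1 hp (by positivity) (by positivity) h1
  · have hemp : S = ∅ := by
      rw [Set.eq_empty_iff_forall_notMem]
      rintro x ⟨n, hn, hx⟩
      have := PM.wpa_le_one F (2 ^ n) (by
        calc 2 = 2 ^ 1 := rfl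
          _ ≤ _ := Nat.pow_le_pow_right (by norm_num) hn) x
      linarith
    rw [hemp]
    refine ⟨Set.finite_empty, ?_⟩
    rw [Set.ncard_empty, Nat.cast_zero, Real.zero_rpow (by positivity), mul_zero]
    have := Real.rpow_nonneg hp1 (-(2 / p))
    positivity
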